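/- arXiv:1407.7454 — 11 statements merged into one kernel-verified Lean document; each statement's English description precedes it below -/
import Mathlib

section
/- Let n be odd and let B ∈ GL(n,ℤ) have determinant 1 and order exactly 2^r for some r ≥ 1. Then the characteristic polynomial of B factors in ℤ[X] as p_B(X) = (X − 1)^{c_1} · ∏_{k=1}^{r} (X^{2^{k−1}} + 1)^{c_{2^k}} for natural numbers c_1, c_2, c_4, …, c_{2^r} with c_1 ≥ 1 and c_{2^r} ≥ 1, and n = c_1 + ∑_{k=1}^{r} 2^{k−1} c_{2^k}. -/
/-!
If `p(M) = 0`, then `X - M` divides `p(X) - p(M) = p(X)` in the matrices over `R[X]`, and taking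
determinants shows that `charpoly M` divides a power of `p`. For a matrix with `M ^ m = 1` this
makes `charpoly M` a monic divisor of a power of `X ^ m - 1 = ∏_{d ∣ m} Φ_d`, hence a product of
powers of the `Φ_d` as soon as these are prime.

Since `Φ_d(0) = 1` for `d ≠ 1`, an `n × n` matrix whose characteristic polynomial is such a product
without the factor `X - 1` has determinant `(-1) ^ n`. If every `Φ_d` that occurs has `d ∣ N`, then
`charpoly M` divides a power of `X ^ N - 1`; in characteristic zero the minimal polynomial of `M`
is squarefree, as a divisor of `X ^ m - 1`, so it divides `X ^ N - 1` itself and `M ^ N = 1`. For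
order `p ^ r` and `N = p ^ (r - 1)` this is impossible, so `Φ_{p ^ r}` occurs.
-/

open Polynomial
open scoped Nat

theorem sub_dvd_aeval_sub_aeval_of_commute {R A : Type*} [CommSemiring R] [Ring A] [Algebra R A]
    {x y : A} (h : Commute x y) (p : R[X]) : x - y ∣ aeval x p - aeval y p := by
  simp only [aeval_eq_sum_range, ← Finset.sum_sub_distrib, ← smul_sub]
  exact Finset.dvd_sum fun i _ => dvd_smul_of_dvd _ (h.sub_dvd_pow_sub_pow i)

section CharpolyDvd

variable {R ι : Type*} [CommRing R] [Fintype ι] [DecidableEq ι]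

theorem charmatrix_dvd_scalar_of_aeval_eq_zero {M : Matrix ι ι R} {p : R[X]}
    (h : aeval M p = 0) : M.charmatrix ∣ Matrix.scalar ι p := by
  have hscalar : aeval (Matrix.scalar ι (X : R[X])) p = Matrix.scalar ι p :=
    (aeval_algebraMap_apply (Matrix ι ι R[X]) X p).trans (by rw [aeval_X_left_apply]; rfl)
  have hmap : aeval ((C : R →+* R[X]).mapMatrix M) p = 0 :=
    (aeval_algHom_apply (Algebra.ofId R R[X]).mapMatrix M p).trans (by rw [h, map_zero])
  have hcomm : Commute (Matrix.scalar ι (X : R[X])) (C.mapMatrix M) :=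
    Matrix.scalar_commute _ (Commute.all _) _
  have hdvd : M.charmatrix ∣ aeval (Matrix.scalar ι (X : R[X])) p - aeval (C.mapMatrix M) p :=
    sub_dvd_aeval_sub_aeval_of_commute hcomm p
  rwa [hscalar, hmap, sub_zero] at hdvd

theorem charpoly_dvd_pow_card_of_aeval_eq_zero {M : Matrix ι ι R} {p : R[X]}
    (h : aeval M p = 0) : M.charpoly ∣ p ^ Fintype.card ι := by
  simpa [Matrix.charpoly] using
    map_dvd Matrix.detMonoidHom (charmatrix_dvd_scalar_of_aeval_eq_zero h)

end CharpolyDvd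

theorem aeval_eq_zero_of_squarefree_of_aeval_pow_eq_zero {K A : Type*} [Field K] [Ring A]
    [Algebra K A] {a : A} {p q : K[X]} {k : ℕ} (hp : Squarefree p) (hpa : aeval a p = 0)
    (hqa : aeval a (q ^ k) = 0) : aeval a q = 0 := by
  rw [← minpoly.dvd_iff] at hpa hqa ⊢
  exact (hp.squarefree_of_dvd hpa).isRadical k q hqa

theorem exists_associated_prod_pow_of_dvd_prod_pow {M ι : Type*} [CommMonoidWithZero M]
    [IsCancelMulZero M] {s : Finset ι} {f : ι → M} (hf : ∀ i ∈ s, Prime (f i)) {e : ι → ℕ} {a : M}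
    (ha : a ∣ ∏ i ∈ s, f i ^ e i) :
    ∃ c : ι → ℕ, Associated a (∏ i ∈ s, f i ^ c i) := by
  classical
  induction s using Finset.induction_on generalizing a with
  | empty => exact ⟨e, by simpa [associated_one_iff_isUnit, isUnit_iff_dvd_one] using ha⟩
  | insert i s hi ih =>
    obtain ⟨b, hb⟩ := ha
    rw [Finset.prod_insert hi, mul_comm] at hb
    obtain ⟨j, -, a', b', -, hs, rfl, -⟩ :=
      mul_eq_mul_prime_pow (hf i (Finset.mem_insert_self i s)) hb.symm
    obtain ⟨c, hc⟩ := ih (fun l hl => hf l (Finset.mem_insert_of_mem hl)) ⟨b', hs⟩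
    refine ⟨Function.update c i j, ?_⟩
    rw [Finset.prod_insert hi, Function.update_self, mul_comm,
      Finset.prod_congr rfl fun l hl => by
        rw [Function.update_of_ne (ne_of_mem_of_not_mem hl hi)]]
    exact hc.mul_left _

theorem natDegree_prod_cyclotomic_pow (R : Type*) [CommRing R] [Nontrivial R] (s : Finset ℕ)
    (c : ℕ → ℕ) :
    (∏ d ∈ s, cyclotomic d R ^ c d).natDegree = ∑ d ∈ s, φ d * c d := by
  rw [natDegree_prod_of_monic _ _ fun d _ => (cyclotomic.monic d R).pow (c d)]
  exact Finset.sum_congr rfl fun d _ => by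
    rw [(cyclotomic.monic d R).natDegree_pow, natDegree_cyclotomic, mul_comm]

theorem coeff_zero_prod_cyclotomic_pow (R : Type*) [CommRing R] {s : Finset ℕ} {c : ℕ → ℕ}
    (hc : c 1 = 0) : (∏ d ∈ s, cyclotomic d R ^ c d).coeff 0 = 1 := by
  rw [coeff_zero_eq_eval_zero, eval_prod]
  refine Finset.prod_eq_one fun d _ => ?_
  rw [eval_pow, ← coeff_zero_eq_eval_zero]
  obtain rfl | rfl | hd : d = 0 ∨ d = 1 ∨ 1 < d := by lia
  · simp
  · rw [hc, pow_zero]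
  · rw [cyclotomic_coeff_zero R hd, one_pow]

theorem prod_cyclotomic_pow_dvd_X_pow_sub_one_pow (R : Type*) [CommRing R] {s : Finset ℕ}
    {c : ℕ → ℕ} {N : ℕ} (hN : ∀ d ∈ s, c d ≠ 0 → d ∣ N) :
    ∏ d ∈ s, cyclotomic d R ^ c d ∣ (X ^ N - 1) ^ ∑ d ∈ s, c d := by
  rw [← Finset.prod_pow_eq_pow_sum]
  refine Finset.prod_dvd_prod_of_dvd _ _ fun d hd => ?_
  obtain hcd | hcd := eq_or_ne (c d) 0
  · simp [hcd]
  · exact pow_dvd_pow_of_dvd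
      ((cyclotomic.dvd_X_pow_sub_one d R).trans (dvd_pow_sub_one_of_dvd (hN d hd hcd))) _

theorem det_eq_neg_one_pow_card_of_charpoly_eq_prod_cyclotomic_pow {R ι : Type*} [CommRing R]
    [Fintype ι] [DecidableEq ι] {M : Matrix ι ι R} {s : Finset ℕ} {c : ℕ → ℕ}
    (h : M.charpoly = ∏ d ∈ s, cyclotomic d R ^ c d) (hc : c 1 = 0) :
    M.det = (-1) ^ Fintype.card ι := by
  rw [Matrix.det_eq_sign_charpoly_coeff, h, coeff_zero_prod_cyclotomic_pow R hc, mul_one]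

theorem cyclotomic_two_pow (R : Type*) [CommRing R] {k : ℕ} (hk : k ≠ 0) :
    cyclotomic (2 ^ k) R = X ^ 2 ^ (k - 1) + 1 := by
  obtain ⟨j, rfl⟩ := Nat.exists_eq_add_one_of_ne_zero hk
  rw [cyclotomic_prime_pow_eq_geom_sum Nat.prime_two, Finset.sum_range_succ, Finset.sum_range_one,
    pow_zero, pow_one, add_comm, Nat.add_sub_cancel]

theorem prod_range_cyclotomic_two_pow_pow (R : Type*) [CommRing R] (r : ℕ) (c : ℕ → ℕ) :
    ∏ k ∈ Finset.range (r + 1), cyclotomic (2 ^ k) R ^ c k =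
      (X - 1) ^ c 0 * ∏ k ∈ Finset.Icc 1 r, (X ^ 2 ^ (k - 1) + 1) ^ c k := by
  rw [Finset.prod_range_eq_mul_Ico _ (Nat.add_one_pos r), Finset.Ico_add_one_right_eq_Icc, pow_zero,
    cyclotomic_one]
  congr 1
  refine Finset.prod_congr rfl fun k hk => ?_
  rw [cyclotomic_two_pow R (Nat.one_le_iff_ne_zero.1 (Finset.mem_Icc.1 hk).1)]

theorem sum_range_totient_two_pow_mul (r : ℕ) (c : ℕ → ℕ) :
    ∑ k ∈ Finset.range (r + 1), φ (2 ^ k) * c k =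
      c 0 + ∑ k ∈ Finset.Icc 1 r, 2 ^ (k - 1) * c k := by
  rw [Finset.sum_range_eq_add_Ico _ (Nat.add_one_pos r), Finset.Ico_add_one_right_eq_Icc, pow_zero,
    Nat.totient_one, one_mul]
  congr 1
  refine Finset.sum_congr rfl fun k hk => ?_
  rw [Nat.totient_prime_pow Nat.prime_two (Finset.mem_Icc.1 hk).1, Nat.add_one_sub_one, mul_one]

section FiniteOrder

variable {R ι : Type*} [CommRing R] [IsDomain R] [Fintype ι] [DecidableEq ι] {M : Matrix ι ι R}
  {m : ℕ}

theorem exists_charpoly_eq_prod_cyclotomic_pow (hm : 0 < m) (hM : M ^ m = 1)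
    (hprime : ∀ d ∈ m.divisors, Prime (cyclotomic d R)) :
    ∃ c : ℕ → ℕ, M.charpoly = ∏ d ∈ m.divisors, cyclotomic d R ^ c d := by
  have hdvd : M.charpoly ∣ ∏ d ∈ m.divisors, cyclotomic d R ^ Fintype.card ι := by
    rw [Finset.prod_pow, prod_cyclotomic_eq_X_pow_sub_one hm]
    exact charpoly_dvd_pow_card_of_aeval_eq_zero (by simp [hM])
  obtain ⟨c, hc⟩ := exists_associated_prod_pow_of_dvd_prod_pow hprime hdvd
  exact ⟨c, eq_of_monic_of_associated M.charpoly_monic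
    (monic_prod_of_monic _ _ fun d _ => (cyclotomic.monic d R).pow (c d)) hc⟩

theorem pow_eq_one_of_charpoly_dvd_X_pow_sub_one_pow {N k : ℕ} (hm : (m : R) ≠ 0)
    (hM : M ^ m = 1) (h : M.charpoly ∣ (X ^ N - 1) ^ k) : M ^ N = 1 := by
  let K := FractionRing R
  let f : Matrix ι ι R →+* Matrix ι ι K := (algebraMap R K).mapMatrix
  have hf : Function.Injective f := Matrix.map_injective (IsFractionRing.injective R K)
  have hsq : Squarefree (X ^ m - 1 : K[X]) :=
    (X_pow_sub_one_separable_iff.2 (by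
      rw [← map_natCast (algebraMap R K)]
      exact (map_ne_zero_iff _ (IsFractionRing.injective R K)).2 hm)).squarefree
  have hdvd : (f M).charpoly ∣ (X ^ N - 1) ^ k := by
    simpa [f, Matrix.charpoly_map] using map_dvd (mapRingHom (algebraMap R K)) h
  have hzero : aeval (f M) (X ^ N - 1 : K[X]) = 0 :=
    aeval_eq_zero_of_squarefree_of_aeval_pow_eq_zero hsq
      (by rw [map_sub, map_pow, aeval_X, ← map_pow, hM, map_one, map_one, sub_self])
      (aeval_eq_zero_of_dvd_aeval_eq_zero hdvd (Matrix.aeval_self_charpoly _))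
  refine hf ?_
  rwa [map_sub, map_pow, aeval_X, map_one, sub_eq_zero, ← map_pow, ← map_one f] at hzero

theorem exponent_prime_pow_ne_zero_of_charpoly_eq_prod_cyclotomic_pow {p r : ℕ} (hp : p.Prime)
    (hpR : (p : R) ≠ 0) (hr : r ≠ 0) (hord : orderOf M = p ^ r) {c : ℕ → ℕ}
    (h : M.charpoly = ∏ d ∈ (p ^ r).divisors, cyclotomic d R ^ c d) : c (p ^ r) ≠ 0 := by
  intro hc
  have hdvd : ∀ d ∈ (p ^ r).divisors, c d ≠ 0 → d ∣ p ^ (r - 1) := by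
    intro d hd hcd
    obtain ⟨k, hk, rfl⟩ := (Nat.mem_divisors_prime_pow hp r).1 hd
    have hkr : k ≠ r := by rintro rfl; exact hcd hc
    exact pow_dvd_pow p (by lia)
  have hpow : M ^ p ^ (r - 1) = 1 :=
    pow_eq_one_of_charpoly_dvd_X_pow_sub_one_pow (m := p ^ r)
      (by rw [Nat.cast_pow]; exact pow_ne_zero r hpR)
      (hord ▸ pow_orderOf_eq_one M) (h ▸ prod_cyclotomic_pow_dvd_X_pow_sub_one_pow R hdvd)
  have hle : r ≤ r - 1 :=
    (Nat.pow_dvd_pow_iff_le_right hp.one_lt).1 (hord ▸ orderOf_dvd_of_pow_eq_one hpow)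
  lia

theorem charpoly_of_orderOf_eq_two_pow_general {p r : ℕ} (hp : p.Prime) (hpR : (p : R) ≠ 0)
    (hprime : ∀ k ≤ r, Prime (cyclotomic (p ^ k) R)) (hdet : M.det ≠ (-1) ^ Fintype.card ι)
    (hord : orderOf M = p ^ r) :
    ∃ c : ℕ → ℕ, 1 ≤ c 0 ∧ 1 ≤ c r ∧
      M.charpoly = ∏ k ∈ Finset.range (r + 1), cyclotomic (p ^ k) R ^ c k ∧
      Fintype.card ι = ∑ k ∈ Finset.range (r + 1), φ (p ^ k) * c k := by
  have hprime' : ∀ d ∈ (p ^ r).divisors, Prime (cyclotomic d R) := by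
    intro d hd
    obtain ⟨k, hk, rfl⟩ := (Nat.mem_divisors_prime_pow hp r).1 hd
    exact hprime k hk
  obtain ⟨c, hc⟩ := exists_charpoly_eq_prod_cyclotomic_pow (pow_pos hp.pos r)
    (hord ▸ pow_orderOf_eq_one M) hprime'
  have hc1 : c 1 ≠ 0 := fun h =>
    hdet (det_eq_neg_one_pow_card_of_charpoly_eq_prod_cyclotomic_pow hc h)
  have hcr : c (p ^ r) ≠ 0 := by
    obtain rfl | hr := eq_or_ne r 0
    · rwa [pow_zero]
    · exact exponent_prime_pow_ne_zero_of_charpoly_eq_prod_cyclotomic_pow hp hpR hr hord hc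
  refine ⟨fun k => c (p ^ k), ?_, Nat.one_le_iff_ne_zero.2 hcr, ?_, ?_⟩
  · simpa [Nat.one_le_iff_ne_zero] using hc1
  · rw [hc, Nat.prod_divisors_prime_pow hp]
  · rw [← M.charpoly_natDegree_eq_dim, hc, natDegree_prod_cyclotomic_pow,
      Nat.sum_divisors_prime_pow hp]

end FiniteOrder

/-- **Characteristic polynomial of an order `2^r` integral matrix with `det = 1` in odd size.**
Let `n` be odd and let `B ∈ GL(n,ℤ)` have determinant `1` and order exactly `2^r`, `r ≥ 1`.
Then `p_B(X) = (X − 1)^(c 0) * ∏_{k=1}^{r} (X^(2^(k−1)) + 1)^(c k)` in `ℤ[X]` for natural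
numbers `c 0, c 1, …, c r` (here `c k` is the exponent of the `2^k`-th cyclotomic polynomial)
with `c 0 ≥ 1` and `c r ≥ 1`, and `n = c 0 + ∑_{k=1}^{r} 2^(k−1) * c k`. -/
theorem charpoly_of_orderOf_eq_two_pow
    (n r : ℕ) (hn : Odd n) (hr : 1 ≤ r) (B : GL (Fin n) ℤ)
    (hdet : Matrix.det (B : Matrix (Fin n) (Fin n) ℤ) = 1)
    (hord : orderOf B = 2 ^ r) :
    ∃ c : ℕ → ℕ, 1 ≤ c 0 ∧ 1 ≤ c r ∧
      Matrix.charpoly (B : Matrix (Fin n) (Fin n) ℤ) =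
        (Polynomial.X - 1) ^ (c 0) *
          ∏ k ∈ Finset.Icc 1 r, (Polynomial.X ^ (2 ^ (k - 1)) + 1) ^ (c k) ∧
      n = c 0 + ∑ k ∈ Finset.Icc 1 r, 2 ^ (k - 1) * c k := by
  simpa only [prod_range_cyclotomic_two_pow_pow, sum_range_totient_two_pow_mul, Fintype.card_fin]
    using charpoly_of_orderOf_eq_two_pow_general Nat.prime_two two_ne_zero
      (fun k _ => (cyclotomic.irreducible (pow_pos two_pos k)).prime)
      (by rw [hdet, Fintype.card_fin, hn.neg_one_pow]; decide) ((orderOf_units (y := B)).trans hord)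
end

section
/- Let N be an even positive integer and k an odd positive integer. Then ∑_{j odd, 1 ≤ j ≤ N−1} ⌊jk/N⌋ = (k−1)N/4, which is an integer. In particular, if N = 2^r with r ≥ 2, then this sum is an even integer. -/
/-!
Pair `j` with `N - j`. If some power of two divides `N` but not `k`, then for odd `j` neither
`jk/N` nor `(N - j)k/N` is an integer. As they add up to `k`, their fractional parts add up to `1`,
so that `⌊jk/N⌋ + ⌊(N - j)k/N⌋ = k - 1`.
-/

open Finset

theorem div_add_div_add_one_of_dvd_add {a b n : ℕ} (hab : n ∣ a + b) (ha : ¬ n ∣ a) :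
    a / n + b / n + 1 = (a + b) / n := by
  have hn : 0 < n := Nat.pos_of_ne_zero (by rintro rfl; simp_all)
  exact (Nat.add_div_eq_of_le_mod_add_mod (Nat.le_mod_add_mod_of_dvd_add_of_not_dvd hab ha) hn).symm

theorem mul_div_add_sub_mul_div {N j k : ℕ} (hj : j ≤ N) (hjk : ¬ N ∣ j * k) :
    j * k / N + (N - j) * k / N = k - 1 := by
  have hN : 0 < N := Nat.pos_of_ne_zero (by rintro rfl; simp_all)
  have hadd : j * k + (N - j) * k = N * k := by rw [← add_mul, Nat.add_sub_cancel' hj]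
  have hdiv := div_add_div_add_one_of_dvd_add (hadd ▸ dvd_mul_right N k) hjk
  rw [hadd, Nat.mul_div_cancel_left k hN] at hdiv
  exact Nat.eq_sub_of_add_eq hdiv

theorem two_nsmul_sum_eq_card_nsmul_of_involution {ι M : Type*} [AddCommMonoid M]
    {s : Finset ι} {σ : ι → ι} {f : ι → M} {c : M} (hσ : ∀ i ∈ s, σ i ∈ s)
    (hσσ : ∀ i ∈ s, σ (σ i) = i) (hf : ∀ i ∈ s, f i + f (σ i) = c) : 2 • ∑ i ∈ s, f i = #s • c := by
  have hreindex : ∑ i ∈ s, f (σ i) = ∑ i ∈ s, f i :=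
    sum_nbij' σ σ hσ hσ hσσ hσσ fun _ _ => rfl
  calc 2 • ∑ i ∈ s, f i = ∑ i ∈ s, (f i + f (σ i)) := by
        rw [sum_add_distrib, hreindex, two_nsmul]
    _ = #s • c := sum_eq_card_nsmul hf

theorem two_mul_sum_mul_div_of_sub_mem {N k : ℕ} {s : Finset ℕ} (hle : ∀ j ∈ s, j ≤ N)
    (hsub : ∀ j ∈ s, N - j ∈ s) (hdvd : ∀ j ∈ s, ¬ N ∣ j * k) :
    2 * ∑ j ∈ s, j * k / N = #s * (k - 1) :=
  two_nsmul_sum_eq_card_nsmul_of_involution hsub (fun j hj => Nat.sub_sub_self (hle j hj))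
    fun j hj => mul_div_add_sub_mul_div (hle j hj) (hdvd j hj)

theorem card_filter_odd_range (n : ℕ) : #{j ∈ range n | Odd j} = n / 2 := by
  have hcount := Nat.count_modEq_card n two_pos 1
  rw [Nat.count_eq_card_filter_range, if_neg (by omega), add_zero] at hcount
  rw [← hcount]
  exact congrArg card (filter_congr fun _ _ => Nat.odd_iff)

theorem not_dvd_mul_of_coprime_of_not_dvd {d j k n : ℕ} (hdn : d ∣ n) (hdj : d.Coprime j)
    (hdk : ¬ d ∣ k) : ¬ n ∣ j * k :=
  fun h => hdk (hdj.dvd_of_dvd_mul_left (hdn.trans h))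

theorem four_mul_sum_floor_odd_eq_general {N k m : ℕ} (hN : 2 ^ m ∣ N) (hk : ¬ 2 ^ m ∣ k) :
    4 * (∑ j ∈ range N with Odd j, j * k / N) = (k - 1) * N ∧
      (Even (∑ j ∈ range N with Odd j, j * k / N) ↔ 8 ∣ (k - 1) * N) := by
  have hm : m ≠ 0 := by rintro rfl; exact hk (one_dvd k)
  have hNeven : Even N := even_iff_two_dvd.2 ((dvd_pow_self 2 hm).trans hN)
  have hpair : 2 * ∑ j ∈ range N with Odd j, j * k / N = N / 2 * (k - 1) := by
    rw [← card_filter_odd_range]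
    refine two_mul_sum_mul_div_of_sub_mem ?_ ?_ ?_ <;>
      simp only [mem_filter, mem_range] <;> rintro j ⟨hjN, hj⟩
    · exact hjN.le
    · exact ⟨Nat.sub_lt (Nat.zero_lt_of_lt hjN) hj.pos, Nat.Even.sub_odd hjN.le hNeven hj⟩
    · exact not_dvd_mul_of_coprime_of_not_dvd hN ((Nat.coprime_two_left.2 hj).pow_left m) hk
  have hsum : 4 * ∑ j ∈ range N with Odd j, j * k / N = (k - 1) * N := by
    calc 4 * ∑ j ∈ range N with Odd j, j * k / N
        = 2 * (2 * ∑ j ∈ range N with Odd j, j * k / N) := by ring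
      _ = (k - 1) * (N / 2 * 2) := by rw [hpair]; ring
      _ = (k - 1) * N := by rw [Nat.div_two_mul_two_of_even hNeven]
  refine ⟨hsum, ?_⟩
  rw [← hsum, even_iff_two_dvd, show 8 = 4 * 2 from rfl, Nat.mul_dvd_mul_iff_left four_pos]

/-- **Sum of floors `⌊jk/N⌋` over odd `j`.**
Let `N` be an even positive integer and `k` an odd positive integer.  Then
`∑_{j odd, 1 ≤ j ≤ N−1} ⌊jk/N⌋ = (k−1)N/4`, an integer (stated as `4 * sum = (k-1) * N`).
In particular, if `N = 2^r` with `r ≥ 2`, then this sum is even. -/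
theorem four_mul_sum_floor_odd_eq
    (N k : ℕ) (hN : Even N) (hN0 : 0 < N) (hk : Odd k) (hk0 : 0 < k) :
    4 * (∑ j ∈ (Finset.range N).filter (fun j => Odd j), (j * k) / N) = (k - 1) * N ∧
    (∀ r : ℕ, 2 ≤ r → N = 2 ^ r →
      Even (∑ j ∈ (Finset.range N).filter (fun j => Odd j), (j * k) / N)) := by
  obtain ⟨hsum, heven⟩ :=
    four_mul_sum_floor_odd_eq_general (m := 1) hN.two_dvd hk.not_two_dvd_nat
  refine ⟨hsum, fun r hr hNr => heven.2 ?_⟩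
  exact mul_dvd_mul (hk.tsub_odd odd_one).two_dvd (hNr ▸ pow_dvd_pow 2 hr : 2 ^ 2 ∣ N)
end

section
/- Let r ≥ 2 be an integer and k an odd positive integer. Then ∏_{j ∈ I_{2^r}^*} sin(jkπ/2^r) = 1 / 2^{2^{r−1} − 1}, where the product is over the odd integers j with 1 ≤ j ≤ 2^r − 1. -/
/-! Writing `sin w = I / 2 * exp (-w * I) * (1 - exp (2 * w * I))`, the product of the
`sin (z + i * k * π / n)` over `i < n` becomes an elementary phase times
`∏ i, (1 - ζ ^ i * exp (2 * z * I))` with `ζ = exp (2 * π * I * (k / n))`. For `k` coprime to `n`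
this `ζ` is a primitive `n`-th root of unity and the product is `1 - exp (2 * z * I) ^ n`, so that
`sin (n * z)` reappears. For odd `k` the phase is a power of `sin (k * π / 2) = ±1`; at
`z = k * π / (2 * n)` these signs combine to `sin (k * π / 2) ^ n`, which is `1` for even `n`. -/

open Finset

theorem prod_range_filter_odd {M : Type*} [CommMonoid M] (f : ℕ → M) (n : ℕ) :
    ∏ j ∈ range (2 * n) with Odd j, f j = ∏ i ∈ range n, f (2 * i + 1) := by
  induction n with
  | zero => simp
  | succ n ih =>
    rw [prod_filter] at ih ⊢
    rw [Nat.mul_succ, prod_range_succ, prod_range_succ, prod_range_succ, ih,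
      if_neg (by simp), if_pos (odd_two_mul_add_one n), mul_one]

theorem prod_one_sub_pow_mul_of_isPrimitiveRoot {R : Type*} [CommRing R] [IsDomain R] {n : ℕ}
    {ζ : R} (hζ : IsPrimitiveRoot ζ n) (hn : 0 < n) (a : R) :
    ∏ i ∈ range n, (1 - ζ ^ i * a) = 1 - a ^ n := by
  simpa [Polynomial.eval_prod] using
    congrArg (Polynomial.eval 1) (X_pow_sub_C_eq_prod hζ hn rfl).symm

section Complex

open Complex
open scoped Real

theorem complex_sin_eq_mul_one_sub_exp (w : ℂ) :
    sin w = I / 2 * exp (-w * I) * (1 - exp (2 * w * I)) := by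
  have hexp : exp (-w * I) * exp (2 * w * I) = exp (w * I) := by
    rw [← exp_add]
    congr 1
    ring
  rw [sin, ← hexp]
  ring

theorem prod_exp_add_natCast_mul (n : ℕ) (a b : ℂ) :
    ∏ i ∈ range n, exp (a + i * b) = exp (n * a) * exp (n * b / 2) ^ (n - 1) := by
  have hsum : (∑ i ∈ range n, (i : ℂ)) = n * (n - 1 : ℕ) / 2 := by
    rw [eq_div_iff two_ne_zero]
    simpa only [Nat.cast_mul, Nat.cast_sum, Nat.cast_ofNat] using
      congrArg (Nat.cast : ℕ → ℂ) (sum_range_id_mul_two n)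
  rw [← exp_sum, sum_add_distrib, sum_const, card_range, nsmul_eq_mul, ← sum_mul, hsum, exp_add,
    ← exp_nat_mul]
  ring_nf

theorem complex_prod_sin_add_mul_pi_div {n : ℕ} (hn : n ≠ 0) {k : ℤ} (hk : IsCoprime k n)
    (z : ℂ) :
    ∏ i ∈ range n, sin (z + i * (k * π / n)) =
      (I * exp (-(k * π / 2) * I) / 2) ^ (n - 1) * sin (n * z) := by
  have hn' : (n : ℂ) ≠ 0 := Nat.cast_ne_zero.mpr hn
  set ζ := exp (2 * π * I * (k / n))
  have hζ : IsPrimitiveRoot ζ n := isPrimitiveRoot_exp_of_isCoprime k n hn hk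
  have hfactor (i : ℕ) : sin (z + i * (k * π / n)) =
      I / 2 * exp (-z * I + i * (-(k * π / n) * I)) * (1 - ζ ^ i * exp (2 * z * I)) := by
    rw [complex_sin_eq_mul_one_sub_exp, ← exp_nat_mul, ← exp_add]
    ring_nf
  have hphase : (n : ℂ) * (-(k * π / n) * I) / 2 = -(k * π / 2) * I := by
    field_simp
  have hpow : exp (2 * z * I) ^ n = exp (2 * (n * z) * I) := by
    rw [← exp_nat_mul]
    ring_nf
  calc ∏ i ∈ range n, sin (z + i * (k * π / n))
      = (I / 2) ^ n * (exp (n * (-z * I)) * exp (-(k * π / 2) * I) ^ (n - 1)) *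
          (1 - exp (2 * (n * z) * I)) := by
        simp_rw [hfactor]
        rw [prod_mul_distrib, prod_mul_distrib, prod_const, card_range,
          prod_exp_add_natCast_mul, hphase,
          prod_one_sub_pow_mul_of_isPrimitiveRoot hζ hn.pos, hpow]
    _ = (I / 2 * exp (-(k * π / 2) * I)) ^ (n - 1) *
          (I / 2 * exp (-(n * z) * I) * (1 - exp (2 * (n * z) * I))) := by
        rw [← mul_pow_sub_one hn, mul_pow]
        ring_nf
    _ = _ := by
        rw [← complex_sin_eq_mul_one_sub_exp, div_mul_eq_mul_div]

end Complex

section Real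

open Real

theorem cos_intCast_mul_pi_div_two_of_odd {k : ℤ} (hk : Odd k) : cos (k * π / 2) = 0 := by
  obtain ⟨m, rfl⟩ := hk
  exact cos_eq_zero_iff.mpr ⟨m, by push_cast; rfl⟩

theorem prod_sin_add_mul_pi_div_of_odd {n : ℕ} (hn : n ≠ 0) {k : ℤ} (hk : IsCoprime k n)
    (hodd : Odd k) (x : ℝ) :
    ∏ i ∈ range n, sin (x + i * (k * π / n)) = (sin (k * π / 2) / 2) ^ (n - 1) * sin (n * x) := by
  have hcos : Complex.cos (k * π / 2) = 0 := by
    exact_mod_cast congrArg Complex.ofReal (cos_intCast_mul_pi_div_two_of_odd hodd)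
  have hphase : Complex.I * Complex.exp (-(k * π / 2) * Complex.I) = Complex.sin (k * π / 2) := by
    rw [Complex.exp_mul_I, Complex.cos_neg, Complex.sin_neg, hcos]
    linear_combination -Complex.sin (k * π / 2) * Complex.I_mul_I
  have h := complex_prod_sin_add_mul_pi_div hn hk x
  rw [hphase] at h
  exact_mod_cast h

theorem prod_sin_odd_mul_odd_general {n : ℕ} (hn : n ≠ 0) (heven : Even n) {k : ℤ}
    (hk : IsCoprime k n) :
    ∏ j ∈ range (2 * n) with Odd j, sin (j * k * π / (2 * n)) = 1 / 2 ^ (n - 1) := by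
  have hn' : (n : ℝ) ≠ 0 := Nat.cast_ne_zero.mpr hn
  have hodd : Odd k :=
    Int.isCoprime_two_right.mp (hk.of_isCoprime_of_dvd_right (mod_cast heven.two_dvd))
  have hsin_sq : sin (k * π / 2) ^ 2 = 1 := by
    rw [sin_sq, cos_intCast_mul_pi_div_two_of_odd hodd]
    norm_num
  calc ∏ j ∈ range (2 * n) with Odd j, sin (j * k * π / (2 * n))
      = ∏ i ∈ range n, sin (k * π / (2 * n) + i * (k * π / n)) := by
        rw [prod_range_filter_odd]
        refine prod_congr rfl fun i _ ↦ congrArg sin ?_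
        push_cast
        field_simp
        ring
    _ = (sin (k * π / 2) / 2) ^ (n - 1) * sin (k * π / 2) := by
        rw [prod_sin_add_mul_pi_div_of_odd hn hk hodd]
        congr 2
        field_simp
    _ = sin (k * π / 2) ^ n / 2 ^ (n - 1) := by
        rw [div_pow, div_mul_eq_mul_div, pow_sub_one_mul hn]
    _ = 1 / 2 ^ (n - 1) := by
        obtain ⟨m, rfl⟩ := heven.two_dvd
        rw [pow_mul, hsin_sq, one_pow]

end Real

open Real in
/-- **Product of sines at odd multiples of `kπ/2^r`.**
Let `r ≥ 2` be an integer and `k` an odd positive integer.  Then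
`∏_{j ∈ I_{2^r}^*} sin(jkπ/2^r) = 1 / 2^(2^(r−1) − 1)`,
where the product is over the odd integers `j` with `1 ≤ j ≤ 2^r − 1`. -/
theorem prod_sin_odd_mul_odd (r k : ℕ) (hr : 2 ≤ r) (hk : Odd k) (hk0 : 0 < k) :
    ∏ j ∈ (Finset.range (2 ^ r)).filter (fun j => Odd j),
        Real.sin (j * k * π / 2 ^ r) = 1 / 2 ^ (2 ^ (r - 1) - 1) := by
  have heven : Even (2 ^ (r - 1)) := even_two.pow_of_ne_zero (by omega)
  have hcoprime : IsCoprime (k : ℤ) (2 ^ (r - 1) : ℕ) :=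
    (hk.coprime_two_right.pow_right _).isCoprime
  simpa [mul_pow_sub_one (show r ≠ 0 by omega)] using
    prod_sin_odd_mul_odd_general (by positivity) heven hcoprime
end

section
/- Let r ≥ 1 and ν ≥ 0 be integers, t ∈ ℤ with t ≤ r, and ℓ an odd integer. Define 𝒮_{r,t}(ω) = ∑_{k ∈ I_{2^r}^*} (−1)^{⌊k/2⌋} sin(kωπ/2^t) for ω ∈ ℤ, the sum being over the odd integers k with 1 ≤ k ≤ 2^r − 1. Then 𝒮_{r,t}(2^ν ℓ) = (−1)^{⌊ℓ/2⌋} · 2^{r−1} if t = ν + 1, and 𝒮_{r,t}(2^ν ℓ) = 0 if t ≠ ν + 1. -/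
/-! With `θ = 2 ^ (ν - t) ℓ π` and `n = 2 ^ (r - 1)` the sum is
`∑ j < n, (-1) ^ j sin ((2 j + 1) θ)`. Multiplying it by `2 cos θ` makes it telescope to
`± sin (2 n θ) = ± sin (2 ^ (r + ν - t) ℓ π) = 0`, so it vanishes unless `cos θ = 0`, in which case
all its terms are equal to `sin θ`. Comparing 2-adic valuations, `cos θ = 0` means exactly that
`t = ν + 1`. -/

open Finset in
theorem sum_range_two_mul_filter_odd {A : Type*} [AddCommMonoid A] (f : ℕ → A) (n : ℕ) :
    ∑ k ∈ range (2 * n) with Odd k, f k = ∑ j ∈ range n, f (2 * j + 1) := by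
  refine sum_nbij' (· / 2) (2 * · + 1) ?_ ?_ ?_ ?_ ?_ <;> grind

theorem zpow_exponent_eq_zero_of_mul_intCast_eq_intCast {K : Type*} [Field K] [CharZero K]
    {p : ℕ} [Fact p.Prime] {s a b : ℤ} (ha : ¬(p : ℤ) ∣ a) (hb : ¬(p : ℤ) ∣ b)
    (h : (p : K) ^ s * a = b) : s = 0 := by
  have hℚ : (p : ℚ) ^ s * a = b := by
    apply Rat.cast_injective (α := K)
    push_cast
    exact h
  have hp : (p : ℚ) ≠ 0 := Nat.cast_ne_zero.2 (Fact.out : p.Prime).ne_zero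
  have ha₀ : (a : ℚ) ≠ 0 := Int.cast_ne_zero.2 fun h₀ ↦ ha (h₀ ▸ dvd_zero _)
  calc
    s = padicValRat p ((p : ℚ) ^ s * a) := by
      rw [padicValRat.mul (zpow_ne_zero s hp) ha₀, padicValRat.zpow,
        padicValRat.self (Fact.out : p.Prime).one_lt, padicValRat.of_int,
        padicValInt.eq_zero_of_not_dvd ha]
      simp
    _ = 0 := by rw [hℚ, padicValRat.of_int, padicValInt.eq_zero_of_not_dvd hb, Nat.cast_zero]

namespace AlternatingSine

open Finset Real

theorem two_mul_cos_mul_sum_neg_one_pow_mul_sin (θ : ℝ) (n : ℕ) :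
    2 * cos θ * ∑ j ∈ range n, (-1) ^ j * sin ((2 * j + 1) * θ) =
      -((-1) ^ n * sin (2 * n * θ)) := by
  induction n with
  | zero => simp
  | succ n ih =>
    have left : 2 * n * θ = (2 * n + 1) * θ - θ := by ring
    have right : 2 * (n + 1 : ℕ) * θ = (2 * n + 1) * θ + θ := by push_cast; ring
    rw [sum_range_succ, mul_add, ih, left, right, sin_sub, sin_add]
    ring

theorem sum_neg_one_pow_mul_sin_eq_zero {θ : ℝ} {n : ℕ} (hcos : cos θ ≠ 0)
    (hsin : sin (2 * n * θ) = 0) :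
    ∑ j ∈ range n, (-1) ^ j * sin ((2 * j + 1) * θ) = 0 := by
  have h := two_mul_cos_mul_sum_neg_one_pow_mul_sin θ n
  rw [hsin, mul_zero, neg_zero] at h
  exact (mul_eq_zero.1 h).resolve_left (mul_ne_zero two_ne_zero hcos)

theorem neg_one_pow_mul_sin_of_cos_eq_zero {θ : ℝ} (hcos : cos θ = 0) (j : ℕ) :
    (-1) ^ j * sin ((2 * j + 1) * θ) = sin θ := by
  induction j with
  | zero => simp
  | succ j ih =>
    have shift : (2 * (j + 1 : ℕ) + 1) * θ = (2 * j + 1) * θ + 2 * θ := by push_cast; ring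
    rw [shift, sin_add, sin_two_mul, cos_two_mul, hcos, ← ih]
    ring

theorem sum_neg_one_pow_mul_sin_of_cos_eq_zero {θ : ℝ} (hcos : cos θ = 0) (n : ℕ) :
    ∑ j ∈ range n, (-1) ^ j * sin ((2 * j + 1) * θ) = n * sin θ := by
  simp only [neg_one_pow_mul_sin_of_cos_eq_zero hcos, sum_const, card_range, nsmul_eq_mul]

theorem sin_odd_mul_pi_div_two {ℓ : ℤ} (hℓ : Odd ℓ) :
    sin (ℓ * (π / 2)) = (-1) ^ ℓ.fdiv 2 := by
  obtain ⟨m, rfl⟩ := hℓ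
  have half : (2 * m + 1).fdiv 2 = m := by
    rw [Int.fdiv_eq_ediv_of_nonneg _ zero_le_two]
    omega
  have shift : ((2 * m + 1 : ℤ) : ℝ) * (π / 2) = π / 2 + m * π := by push_cast; ring
  rw [half, shift, sin_add_int_mul_pi, sin_pi_div_two, mul_one]

theorem cos_two_zpow_mul_odd_mul_pi_eq_zero_iff {ℓ : ℤ} (hℓ : Odd ℓ) (s : ℤ) :
    cos (2 ^ s * ℓ * π) = 0 ↔ s = -1 := by
  rw [cos_eq_zero_iff]
  constructor
  · rintro ⟨k, hk⟩
    have h : ((2 : ℕ) : ℝ) ^ (s + 1) * ℓ = (2 * k + 1 : ℤ) := by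
      refine mul_right_cancel₀ pi_ne_zero ?_
      push_cast
      rw [zpow_add_one₀ two_ne_zero]
      linear_combination 2 * hk
    have := zpow_exponent_eq_zero_of_mul_intCast_eq_intCast
      (by grind) (by grind) h
    omega
  · rintro rfl
    obtain ⟨m, rfl⟩ := hℓ
    exact ⟨m, by push_cast; ring⟩

theorem sin_two_zpow_mul_int_mul_pi_eq_zero {s : ℤ} (hs : 0 ≤ s) (a : ℤ) :
    sin (2 ^ s * a * π) = 0 := by
  lift s to ℕ using hs
  simpa using sin_int_mul_pi (2 ^ s * a)

theorem sum_neg_one_pow_mul_sin_two_zpow_mul_odd_mul_pi {ℓ : ℤ} (hℓ : Odd ℓ) {m : ℕ} {s : ℤ}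
    (hs : 0 ≤ (m : ℤ) + 1 + s) :
    ∑ j ∈ range (2 ^ m), (-1) ^ j * sin ((2 * j + 1) * (2 ^ s * ℓ * π)) =
      if s = -1 then (-1) ^ ℓ.fdiv 2 * 2 ^ m else 0 := by
  have hcos := cos_two_zpow_mul_odd_mul_pi_eq_zero_iff hℓ s
  split_ifs with h
  · have hθ : (2 : ℝ) ^ s * ℓ * π = ℓ * (π / 2) := by rw [h]; ring
    rw [sum_neg_one_pow_mul_sin_of_cos_eq_zero (hcos.2 h), hθ, sin_odd_mul_pi_div_two hℓ]
    push_cast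
    ring
  · refine sum_neg_one_pow_mul_sin_eq_zero (mt hcos.1 h) ?_
    have double : 2 * (2 ^ m : ℕ) * (2 ^ s * ℓ * π) = 2 ^ ((m : ℤ) + 1 + s) * ℓ * π := by
      rw [zpow_add₀ two_ne_zero, zpow_add_one₀ two_ne_zero, zpow_natCast]
      push_cast
      ring
    rw [double, sin_two_zpow_mul_int_mul_pi_eq_zero hs]

theorem sum_odd_neg_one_pow_mul_sin (θ : ℝ) (n : ℕ) :
    ∑ k ∈ range (2 * n) with Odd k, (-1) ^ (k / 2) * sin (k * θ) =
      ∑ j ∈ range n, (-1) ^ j * sin ((2 * j + 1) * θ) := by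
  rw [sum_range_two_mul_filter_odd]
  refine sum_congr rfl fun j _ ↦ ?_
  rw [show (2 * j + 1) / 2 = j by omega]
  push_cast
  rfl

end AlternatingSine

open Real AlternatingSine in
theorem alternating_sum_sin_two_pow_general
    (r ν : ℕ) (t : ℤ) (ht : t ≤ (r : ℤ) + ν) (ℓ : ℤ) (hℓ : Odd ℓ) :
    (∑ k ∈ (Finset.range (2 ^ r)).filter (fun k => Odd k),
        (-1 : ℝ) ^ (k / 2) *
          Real.sin ((k : ℝ) * (((2 ^ ν * ℓ : ℤ) : ℝ)) * π / (2 : ℝ) ^ t)) =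
      if t = (ν : ℤ) + 1 then (-1 : ℝ) ^ (Int.fdiv ℓ 2) * 2 ^ (r - 1) else 0 := by
  obtain _ | m := r
  · rw [if_neg (by omega), pow_zero, Finset.sum_filter, Finset.sum_range_one,
      if_neg Nat.not_odd_zero]
  have angle (k : ℕ) : (k : ℝ) * ((2 ^ ν * ℓ : ℤ) : ℝ) * π / 2 ^ t =
      k * (2 ^ ((ν : ℤ) - t) * ℓ * π) := by
    rw [zpow_sub₀ two_ne_zero, zpow_natCast]
    push_cast
    ring
  have exponent : (ν : ℤ) - t = -1 ↔ t = ν + 1 := by omega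
  simp only [angle, pow_succ' 2 m, sum_odd_neg_one_pow_mul_sin, Nat.add_sub_cancel, ← exponent]
  exact sum_neg_one_pow_mul_sin_two_zpow_mul_odd_mul_pi hℓ (by omega)

open Real in
/-- **Alternating sums of sines `𝒮_{r,t}(2^ν ℓ)`.**
Let `r ≥ 1` and `ν ≥ 0` be integers, `t ∈ ℤ` with `t ≤ r`, and `ℓ` an odd integer.  With
`𝒮_{r,t}(ω) = ∑_{k ∈ I_{2^r}^*} (−1)^⌊k/2⌋ sin(kωπ/2^t)` (sum over odd `k`, `1 ≤ k ≤ 2^r − 1`),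
we have `𝒮_{r,t}(2^ν ℓ) = (−1)^⌊ℓ/2⌋ · 2^(r−1)` if `t = ν + 1`, and `= 0` otherwise. -/
theorem alternating_sum_sin_two_pow
    (r ν : ℕ) (hr : 1 ≤ r) (t : ℤ) (ht : t ≤ (r : ℤ)) (ℓ : ℤ) (hℓ : Odd ℓ) :
    (∑ k ∈ (Finset.range (2 ^ r)).filter (fun k => Odd k),
        (-1 : ℝ) ^ (k / 2) *
          Real.sin ((k : ℝ) * (((2 ^ ν * ℓ : ℤ) : ℝ)) * π / (2 : ℝ) ^ t)) =
      if t = (ν : ℤ) + 1 then (-1 : ℝ) ^ (Int.fdiv ℓ 2) * 2 ^ (r - 1) else 0 :=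
  alternating_sum_sin_two_pow_general r ν t (by omega) ℓ hℓ
end

section
/- Let r ≥ 3 be an integer and k an odd positive integer. Then ∏_{j ∈ I_{2^{r−1}}^*} cot(jkπ/2^r) = 1, where the product is over the odd integers j with 1 ≤ j ≤ 2^{r−1} − 1 (equivalently 1 ≤ j ≤ 2^{r−1}). (Note: each angle jkπ/2^r is not an integer multiple of π, so every cotangent is defined.) -/
/-!
If two angles add up to an odd multiple of `π / 2`, the cotangent of one is the tangent of the
other. When `4 ∣ n`, the reflection `j ↦ n - j` permutes the odd `j < n` without fixed points, and
for odd `k` it pairs the angles `j * k * π / (2 * n)` so that each pair adds up to `k * π / 2`.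
The cotangents therefore cancel in pairs; the tangents involved are nonzero because `j * k` is odd
and hence not a multiple of `n`.
-/

section Reflection

open Finset

theorem prod_odd_range_eq_one_of_mul_reflect_eq_one {M : Type*} [CommMonoid M] {n : ℕ}
    (hn : 4 ∣ n) {f : ℕ → M} (hf : ∀ j < n, Odd j → f j * f (n - j) = 1) :
    ∏ j ∈ range n with Odd j, f j = 1 := by
  refine prod_involution (fun j _ ↦ n - j) ?mul_eq_one ?no_fixed_point ?maps_to ?involutive <;>
    simp only [mem_filter, mem_range]
  case mul_eq_one => exact fun j ⟨hjn, hj⟩ ↦ hf j hjn hj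
  -- A fixed point would be `n / 2`, which is even.
  case no_fixed_point => grind
  case maps_to => grind
  case involutive => exact fun j ⟨hjn, _⟩ ↦ Nat.sub_sub_self hjn.le

end Reflection

section Cotangent

open Real

theorem cot_odd_mul_pi_div_two_sub {k : ℤ} (hk : Odd k) (x : ℝ) :
    cot (k * π / 2 - x) = tan x := by
  obtain ⟨m, rfl⟩ := hk
  calc cot ((2 * m + 1 : ℤ) * π / 2 - x)
      = (tan (π / 2 - x + m * π))⁻¹ := by rw [tan_inv_eq_cot]; push_cast; ring_nf
    _ = tan x := by rw [tan_add_int_mul_pi, tan_pi_div_two_sub, inv_inv]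

theorem cot_mul_cot_odd_mul_pi_div_two_sub {k : ℤ} (hk : Odd k) {x : ℝ} (hx : tan x ≠ 0) :
    cot x * cot (k * π / 2 - x) = 1 := by
  rw [cot_odd_mul_pi_div_two_sub hk, ← tan_inv_eq_cot, inv_mul_cancel₀ hx]

theorem tan_int_mul_pi_div_two_mul_ne_zero {a n : ℤ} (hn : n ≠ 0) (ha : ¬ n ∣ a) :
    tan (a * π / (2 * n)) ≠ 0 := by
  refine tan_ne_zero_iff.mpr fun m h ↦ ha (Dvd.intro_left m ?_)
  field_simp at h
  exact_mod_cast h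

theorem prod_cot_odd_eq_one_general {n : ℕ} {k : ℤ} (hn : 4 ∣ n) (hk : Odd k) :
    ∏ j ∈ Finset.range n with Odd j, cot (j * k * π / (2 * n)) = 1 := by
  refine prod_odd_range_eq_one_of_mul_reflect_eq_one hn fun j hjn hj ↦ ?_
  have hn0 : (n : ℤ) ≠ 0 := by omega
  have hn_even : (2 : ℤ) ∣ n := by omega
  have hjk : Odd (j * k) := hj.natCast.mul hk
  have hndvd : ¬ (n : ℤ) ∣ j * k := fun h ↦
    Int.not_even_iff_odd.mpr hjk (even_iff_two_dvd.mpr (hn_even.trans h))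
  have htan : tan (j * k * π / (2 * n)) ≠ 0 := by
    simpa using tan_int_mul_pi_div_two_mul_ne_zero hn0 hndvd
  have hreflect : ((n - j : ℕ) : ℝ) * k * π / (2 * n) = k * π / 2 - j * k * π / (2 * n) := by
    rw [Nat.cast_sub hjn.le]
    have : (n : ℝ) ≠ 0 := mod_cast hn0
    field_simp
  rw [hreflect]
  exact cot_mul_cot_odd_mul_pi_div_two_sub hk htan

end Cotangent

open Real in
/-- **Product of cotangents at odd multiples of `kπ/2^r`.**
Let `r ≥ 3` be an integer and `k` an odd positive integer.  Then
`∏_{j ∈ I_{2^{r−1}}^*} cot(jkπ/2^r) = 1`, where the product is over the odd integers `j`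
with `1 ≤ j ≤ 2^(r−1) − 1` (equivalently `1 ≤ j ≤ 2^(r−1)`). -/
theorem prod_cot_odd_eq_one (r k : ℕ) (hr : 3 ≤ r) (hk : Odd k) (hk0 : 0 < k) :
    ∏ j ∈ (Finset.range (2 ^ (r - 1))).filter (fun j => Odd j),
        Real.cot (j * k * π / 2 ^ r) = 1 := by
  have hfour : 4 ∣ 2 ^ (r - 1) := pow_dvd_pow 2 (by omega : 2 ≤ r - 1)
  have hpow : (2 : ℝ) ^ r = 2 * 2 ^ (r - 1) := (mul_pow_sub_one (by omega) 2).symm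
  simpa [hpow] using prod_cot_odd_eq_one_general hfour (hk.natCast (R := ℤ))
end

section
/- For every integer r ≥ 2, ∏_{j ∈ I_{2^{r−1}}^*} cos(jπ/2^r) = √2 / 2^{2^{r−2}}, where the product is over the odd integers j with 1 ≤ j ≤ 2^{r−1}. -/
/-!
The Chebyshev polynomial `T (2n)` has leading coefficient `2 ^ (2n - 1)` and roots
`cos ((2k + 1)π / (4n))`, `k < 2n`, and takes the value `(-1) ^ n` at `0`. Since these roots are
exchanged in pairs by `x ↦ -x`, their product is `(-1) ^ n` times the square of the product of the
positive ones, so the latter product is the positive square root of `2 / 4 ^ n`.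
-/

section

open Finset Polynomial Real

theorem prod_range_two_mul_filter_odd {M : Type*} [CommMonoid M] (f : ℕ → M) (n : ℕ) :
    ∏ j ∈ range (2 * n) with Odd j, f j = ∏ k ∈ range n, f (2 * k + 1) := by
  rw [prod_filter]
  induction n with
  | zero => simp
  | succ n ih => simp [mul_add_one, prod_range_succ, ih]

theorem prod_range_two_mul_eq_prod_mul_reflect {M : Type*} [CommMonoid M] (f : ℕ → M) (n : ℕ) :
    ∏ k ∈ range (2 * n), f k = ∏ k ∈ range n, f k * f (2 * n - 1 - k) := by
  rw [two_mul, prod_range_add, ← prod_range_reflect (fun k ↦ f (n + k)), prod_mul_distrib]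
  congr 1
  refine prod_congr rfl fun k hk ↦ ?_
  have hkn : k < n := mem_range.mp hk
  congr 1
  omega

theorem eval_chebyshev_T_real_eq_prod (n : ℕ) (x : ℝ) :
    (Chebyshev.T ℝ n).eval x =
      2 ^ (n - 1) * ∏ k ∈ range n, (x - cos ((2 * k + 1) * π / (2 * n))) := by
  have hroots : (Chebyshev.T ℝ n).roots =
      (Multiset.range n).map fun k : ℕ ↦ cos ((2 * k + 1) * π / (2 * n)) := by
    rw [Chebyshev.roots_T_real, image_val, range_val, (Chebyshev.roots_T_real_nodup n).dedup]
  have hsplits : (Chebyshev.T ℝ n).Splits := by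
    rw [splits_iff_card_roots, hroots]
    simp
  rw [hsplits.eval_eq_prod_roots, hroots, Multiset.map_map, Chebyshev.leadingCoeff_T]
  rfl

theorem cos_two_mul_reflect_add_one {n k : ℕ} (hk : k < n) :
    cos ((2 * (n - 1 - k : ℕ) + 1) * π / (2 * n)) = -cos ((2 * k + 1) * π / (2 * n)) := by
  have hn : (n : ℝ) ≠ 0 := mod_cast (by omega : n ≠ 0)
  have hcast : ((n - 1 - k : ℕ) : ℝ) = n - (k + 1) := by
    rw [Nat.sub_sub, add_comm, Nat.cast_sub hk, Nat.cast_add_one]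
  rw [← cos_pi_sub, hcast]
  congr 1
  field_simp
  ring

theorem eval_zero_chebyshev_T_real_eq_prod_sq (n : ℕ) :
    (Chebyshev.T ℝ (2 * n)).eval 0 =
      2 ^ (2 * n - 1) * ((-1) ^ n * (∏ k ∈ range n, cos ((2 * k + 1) * π / (4 * n))) ^ 2) := by
  have hpair : ∀ k ∈ range n,
      (0 - cos ((2 * k + 1) * π / (2 * (2 * n : ℕ)))) *
        (0 - cos ((2 * (2 * n - 1 - k : ℕ) + 1) * π / (2 * (2 * n : ℕ)))) =
      -cos ((2 * k + 1) * π / (4 * n)) ^ 2 := by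
    intro k hk
    have hkn : k < 2 * n := by grind
    have hden : (2 * (2 * n : ℕ) : ℝ) = 4 * n := by push_cast; ring
    rw [cos_two_mul_reflect_add_one hkn, hden]
    ring
  have heval := eval_chebyshev_T_real_eq_prod (2 * n) 0
  rwa [prod_range_two_mul_eq_prod_mul_reflect, prod_congr rfl hpair, prod_neg, prod_pow,
    card_range, Nat.cast_mul, Nat.cast_ofNat] at heval

theorem prod_cos_two_mul_add_one_sq {n : ℕ} (hn : n ≠ 0) :
    (∏ k ∈ range n, cos ((2 * k + 1) * π / (4 * n))) ^ 2 = 2 / 4 ^ n := by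
  have heval := eval_zero_chebyshev_T_real_eq_prod_sq n
  rw [Chebyshev.T_eval_two_mul_zero, Int.cast_negOnePow_natCast, mul_left_comm,
    left_eq_mul₀ (pow_ne_zero n (neg_ne_zero.mpr one_ne_zero))] at heval
  have hfour : (4 : ℝ) ^ n = 2 * 2 ^ (2 * n - 1) := by
    rw [← pow_succ', Nat.sub_add_cancel (by omega), pow_mul]
    norm_num
  rw [eq_div_iff (by positivity), hfour]
  linear_combination 2 * heval

theorem prod_cos_two_mul_add_one_nonneg (n : ℕ) :
    0 ≤ ∏ k ∈ range n, cos ((2 * k + 1) * π / (4 * n)) := by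
  refine prod_nonneg fun k hk ↦ cos_nonneg_of_neg_pi_div_two_le_of_le ?_ ?_
  · exact (neg_nonpos.mpr (by positivity)).trans (by positivity)
  · have hkn : (k : ℝ) + 1 ≤ n := mod_cast mem_range.mp hk
    rw [div_le_div_iff₀ (by linarith [k.cast_nonneg (α := ℝ)]) two_pos]
    nlinarith [pi_pos]

theorem prod_cos_odd_half_general {n : ℕ} (hn : n ≠ 0) :
    ∏ j ∈ range (2 * n) with Odd j, cos (j * π / (4 * n)) = √2 / 2 ^ n := by
  calc
    _ = ∏ k ∈ range n, cos ((2 * k + 1) * π / (4 * n)) := by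
      rw [prod_range_two_mul_filter_odd fun j ↦ cos (j * π / (4 * n))]
      push_cast
      rfl
    _ = √(2 / 4 ^ n) := by
      rw [← prod_cos_two_mul_add_one_sq hn, sqrt_sq (prod_cos_two_mul_add_one_nonneg n)]
    _ = √2 / 2 ^ n := by
      have hfour : (4 : ℝ) ^ n = (2 ^ n) ^ 2 := by
        rw [pow_right_comm]
        norm_num
      rw [sqrt_div zero_le_two, hfour, sqrt_sq (by positivity)]

end

open Real in
/-- **Product of cosines at odd multiples of `π/2^r` up to `π/2`.**
For every integer `r ≥ 2`, `∏_{j ∈ I_{2^{r−1}}^*} cos(jπ/2^r) = √2 / 2^(2^(r−2))`,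
where the product is over the odd integers `j` with `1 ≤ j ≤ 2^(r−1)`. -/
theorem prod_cos_odd_half : ∀ r : ℕ, 2 ≤ r →
    ∏ j ∈ (Finset.range (2 ^ (r - 1))).filter (fun j => Odd j),
        Real.cos (j * π / 2 ^ r) = Real.sqrt 2 / 2 ^ (2 ^ (r - 2)) := by
  intro r hr
  obtain ⟨k, rfl⟩ := Nat.exists_eq_add_of_le' hr
  convert prod_cos_odd_half_general (pow_ne_zero k two_ne_zero) using 4 <;> push_cast <;> ring
end

section
/- Let r ≥ 2 be an integer and ℓ an odd integer, and let N be either 2^r or 2^{r−1}. Then ∑_{k ∈ I_N^*} (−1)^{⌊k/2⌋} cot(kℓπ/2^r) = (−1)^{⌊ℓ/2⌋} · N/2, where the sum is over the odd integers k with 1 ≤ k ≤ N − 1 (equivalently 1 ≤ k ≤ N). -/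
/-!
Let `S n θ = ∑ j < n, (-1) ^ j * cot ((2 * j + 1) * θ)`. Pairing the `j`-th term of `S (2 * n) θ`
with the `j`-th term from the end pairs the angle `x` with `4 * n * θ - x`, with opposite signs.
If `4 * n * θ` is an odd multiple of `π / 2`, each pair contributes
`cot x - tan x = 2 * cot (2 * x)`, so `S (2 * n) θ = 2 * S n (2 * θ)`. For `n` a power of two this
descends to the single value `cot (ℓ * π / 4) = ±1`, which settles `N = 2 ^ (r - 1)`.
If `4 * n * θ` is a multiple of `π`, each pair contributes `2 * cot x`, so
`S (2 * n) θ = 2 * S n θ`, which reduces `N = 2 ^ r` to the previous case.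
-/

open Finset Real

section SumRange

variable {M : Type*} [AddCommMonoid M]

theorem sum_range_two_mul_eq_sum_add_reflect (f : ℕ → M) (n : ℕ) :
    ∑ j ∈ range (2 * n), f j = ∑ j ∈ range n, (f j + f (2 * n - 1 - j)) := by
  rw [two_mul, sum_range_add, sum_add_distrib, ← sum_range_reflect (fun j => f (n + j))]
  congr 1
  refine sum_congr rfl fun j hj => ?_
  have hj : j < n := mem_range.mp hj
  congr 1
  lia

theorem sum_filter_odd_range_two_mul (f : ℕ → M) (n : ℕ) :
    ∑ k ∈ range (2 * n) with Odd k, f k = ∑ j ∈ range n, f (2 * j + 1) := by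
  induction n with
  | zero => simp
  | succ n ih =>
    rw [sum_filter] at ih ⊢
    rw [sum_range_succ _ n, ← ih, mul_add_one, sum_range_succ, sum_range_succ,
      if_neg (Nat.not_odd_iff_even.mpr (even_two_mul n)), if_pos (odd_two_mul_add_one n), add_zero]

end SumRange

section Cot

theorem cot_int_mul_pi_sub (x : ℝ) (m : ℤ) : cot (m * π - x) = -cot x := by
  rw [← tan_inv_eq_cot, tan_int_mul_pi_sub, inv_neg, tan_inv_eq_cot]

theorem cot_pi_div_two_add_int_mul_pi_sub (x : ℝ) (m : ℤ) :
    cot (π / 2 + m * π - x) = tan x := by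
  rw [add_sub_right_comm, ← tan_inv_eq_cot, tan_add_int_mul_pi, tan_pi_div_two_sub, inv_inv]

theorem cot_sub_tan (x : ℝ) : cot x - tan x = 2 * cot (2 * x) := by
  rw [cot_eq_cos_div_sin, cot_eq_cos_div_sin, tan_eq_sin_div_cos, cos_two_mul', sin_two_mul]
  by_cases hsin : sin x = 0
  · simp [hsin]
  by_cases hcos : cos x = 0
  · simp [hcos]
  field_simp

theorem cot_odd_mul_pi_div_four (m : ℤ) : cot ((2 * m + 1) * π / 4) = (-1) ^ m := by
  rw [← tan_inv_eq_cot]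
  obtain ⟨n, rfl | rfl⟩ := m.even_or_odd'
  · have hangle : (2 * (2 * n : ℤ) + 1) * π / 4 = π / 4 + n * π := by push_cast; ring
    rw [hangle, tan_add_int_mul_pi, tan_pi_div_four, inv_one, (even_two_mul n).neg_one_zpow]
  · have hangle : (2 * (2 * n + 1 : ℤ) + 1) * π / 4 = (n + 1 : ℤ) * π - π / 4 := by
      push_cast; ring
    rw [hangle, tan_int_mul_pi_sub, tan_pi_div_four, inv_neg_one,
      (odd_two_mul_add_one n).neg_one_zpow]

end Cot

/-- The alternating sum `cot θ - cot (3 * θ) + cot (5 * θ) - ⋯` with `n` terms. It is indexed by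
`j` with `k = 2 * j + 1`, so that the sign `(-1) ^ ⌊k / 2⌋` is `(-1) ^ j`. -/
noncomputable def altCotSum (n : ℕ) (θ : ℝ) : ℝ :=
  ∑ j ∈ range n, (-1) ^ j * cot ((2 * j + 1) * θ)

theorem sum_filter_odd_cot_eq_altCotSum (n : ℕ) (θ : ℝ) :
    ∑ k ∈ range (2 * n) with Odd k, (-1) ^ (k / 2) * cot (k * θ) = altCotSum n θ := by
  rw [sum_filter_odd_range_two_mul, altCotSum]
  refine sum_congr rfl fun j _ => ?_
  rw [show (2 * j + 1) / 2 = j by lia]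
  push_cast
  rfl

theorem altCotSum_two_mul (n : ℕ) (θ : ℝ) :
    altCotSum (2 * n) θ = ∑ j ∈ range n,
      (-1) ^ j * (cot ((2 * j + 1) * θ) - cot (4 * n * θ - (2 * j + 1) * θ)) := by
  rw [altCotSum, sum_range_two_mul_eq_sum_add_reflect]
  refine sum_congr rfl fun j hj => ?_
  have hj : j < n := mem_range.mp hj
  obtain ⟨i, hi⟩ : ∃ i, i = 2 * n - 1 - j := ⟨_, rfl⟩
  have hij : i + j + 1 = 2 * n := by lia
  have hsign : (-1 : ℝ) ^ i = -(-1) ^ j := by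
    have hodd : Odd (i + j) := ⟨n - 1, by lia⟩
    have hprod : (-1 : ℝ) ^ i * (-1) ^ j = -1 := by rw [← pow_add, hodd.neg_one_pow]
    rcases neg_one_pow_eq_or ℝ j with h | h <;> rw [h] at hprod ⊢ <;> linarith
  have hangle : (2 * i + 1) * θ = 4 * n * θ - (2 * j + 1) * θ := by
    have hij' : (i + j + 1 : ℝ) = 2 * n := mod_cast hij
    linear_combination 2 * θ * hij'
  rw [← hi, hsign, hangle]
  ring

theorem altCotSum_two_mul_of_eq_int_mul_pi {n : ℕ} {θ : ℝ} {m : ℤ} (h : 4 * n * θ = m * π) :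
    altCotSum (2 * n) θ = 2 * altCotSum n θ := by
  rw [altCotSum_two_mul, altCotSum, mul_sum]
  refine sum_congr rfl fun j _ => ?_
  rw [h, cot_int_mul_pi_sub]
  ring

theorem altCotSum_two_mul_of_eq_pi_div_two_add {n : ℕ} {θ : ℝ} {m : ℤ}
    (h : 4 * n * θ = π / 2 + m * π) : altCotSum (2 * n) θ = 2 * altCotSum n (2 * θ) := by
  rw [altCotSum_two_mul, altCotSum, mul_sum]
  refine sum_congr rfl fun j _ => ?_
  rw [h, cot_pi_div_two_add_int_mul_pi_sub, cot_sub_tan, mul_left_comm 2 (2 * (j : ℝ) + 1) θ]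
  ring

theorem altCotSum_two_pow (s : ℕ) (m : ℤ) :
    altCotSum (2 ^ s) ((2 * m + 1) * π / 2 ^ (s + 2)) = (-1) ^ m * 2 ^ s := by
  induction s with
  | zero => norm_num [altCotSum, cot_odd_mul_pi_div_four]
  | succ s ih =>
    have hfold : 4 * (2 ^ s : ℕ) * ((2 * m + 1) * π / 2 ^ (s + 1 + 2)) = π / 2 + m * π := by
      push_cast
      field_simp
      ring
    have hdouble : 2 * ((2 * m + 1) * π / 2 ^ (s + 1 + 2)) = (2 * m + 1) * π / 2 ^ (s + 2) := by
      field_simp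
      ring
    rw [pow_succ', altCotSum_two_mul_of_eq_pi_div_two_add hfold, hdouble, ih]
    ring

theorem altCotSum_two_pow_succ (s : ℕ) (m : ℤ) :
    altCotSum (2 ^ (s + 1)) ((2 * m + 1) * π / 2 ^ (s + 2)) = (-1) ^ m * 2 ^ (s + 1) := by
  have hfold : 4 * (2 ^ s : ℕ) * ((2 * m + 1) * π / 2 ^ (s + 2)) = (2 * m + 1 : ℤ) * π := by
    push_cast
    field_simp
    ring
  rw [pow_succ', altCotSum_two_mul_of_eq_int_mul_pi hfold, altCotSum_two_pow]
  ring

open Real in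
/-- **Alternating sums of cotangents.**
Let `r ≥ 2` be an integer and `ℓ` an odd integer, and let `N` be either `2^r` or `2^(r−1)`.
Then `∑_{k ∈ I_N^*} (−1)^⌊k/2⌋ cot(kℓπ/2^r) = (−1)^⌊ℓ/2⌋ · N/2`, where the sum is over the
odd integers `k` with `1 ≤ k ≤ N − 1`. -/
theorem alternating_sum_cot
    (r : ℕ) (hr : 2 ≤ r) (ℓ : ℤ) (hℓ : Odd ℓ) (N : ℕ)
    (hN : N = 2 ^ r ∨ N = 2 ^ (r - 1)) :
    ∑ k ∈ (Finset.range N).filter (fun k => Odd k),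
        (-1 : ℝ) ^ (k / 2) * Real.cot ((k : ℝ) * (ℓ : ℝ) * π / 2 ^ r) =
      (-1 : ℝ) ^ (Int.fdiv ℓ 2) * (N : ℝ) / 2 := by
  obtain ⟨m, rfl⟩ := hℓ
  obtain ⟨s, rfl⟩ := Nat.exists_eq_add_of_le' hr
  have hfloor : Int.fdiv (2 * m + 1) 2 = m := by
    rw [Int.fdiv_eq_ediv_of_nonneg _ zero_le_two]
    lia
  obtain ⟨n, rfl, hn⟩ : ∃ n : ℕ, N = 2 * n ∧
      altCotSum n ((2 * m + 1) * π / 2 ^ (s + 2)) = (-1) ^ m * n := by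
    rcases hN with rfl | rfl
    · exact ⟨2 ^ (s + 1), pow_succ' 2 (s + 1), mod_cast altCotSum_two_pow_succ s m⟩
    · exact ⟨2 ^ s, pow_succ' 2 s, mod_cast altCotSum_two_pow s m⟩
  have hangle (k : ℝ) : k * (2 * m + 1 : ℤ) * π / 2 ^ (s + 2) =
      k * ((2 * m + 1) * π / 2 ^ (s + 2)) := by
    push_cast
    ring
  simp only [hangle]
  rw [sum_filter_odd_cot_eq_altCotSum, hn, hfloor]
  push_cast
  ring
end

section
/- Let ν ≥ 0 be an integer. Then for every s ∈ ℂ, ∑_{j ∈ I_{2^{ν+1}}^*} (−1)^{⌊j/2⌋} ( ζ(s, j/2^{ν+2}) − ζ(s, 1 − j/2^{ν+2}) ) = 2^{(ν+2)s} · L(s, χ_4), where the sum is over the odd integers j with 1 ≤ j ≤ 2^{ν+1} − 1 (equivalently 1 ≤ j ≤ 2^{ν+1}), and both sides are the analytic continuations (entire functions of s). -/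
/-!
For `N ∣ M`, a function `Φ` on `ZMod N` has the same Dirichlet series when it is regarded as a
function on `ZMod M`, so by analytic continuation `M ^ s * L(Φ, s)` is the sum of
`Φ j * ζ(s, j / M)` over the residues `j` mod `M`. If `Φ` is odd and `M = 2 * m`, the terms at `j`
and `M - j` combine to `Φ j * (ζ(s, j / M) - ζ(s, 1 - j / M))`, and the terms at `0` and `m` vanish.
The theorem is the case `Φ = χ₄`, whose value at an odd `j` is `(-1) ^ (j / 2)`.
-/

section ZModLFunction

open Complex Filter Finset HurwitzZeta Topology

variable {M N : ℕ} [NeZero M] [NeZero N] {Φ : ZMod M → ℂ} {Ψ : ZMod N → ℂ}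

lemma LFunction_eq_of_natCast_eq_of_ne_one (h : ∀ n : ℕ, Φ n = Ψ n) {s : ℂ} (hs : s ≠ 1) :
    ZMod.LFunction Φ s = ZMod.LFunction Ψ s := by
  have analytic {K : ℕ} [NeZero K] (Θ : ZMod K → ℂ) :
      AnalyticOnNhd ℂ (ZMod.LFunction Θ) {1}ᶜ :=
    DifferentiableOn.analyticOnNhd (fun t ht ↦
      (ZMod.differentiableAt_LFunction Θ t (.inl ht)).differentiableWithinAt) isOpen_compl_singleton
  have preconnected : IsPreconnected ({1}ᶜ : Set ℂ) :=
    (isConnected_compl_singleton_of_one_lt_rank (by simp) _).isPreconnected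
  refine (analytic Φ).eqOn_of_preconnected_of_eventuallyEq (analytic Ψ) preconnected
    (show (2 : ℂ) ∈ {1}ᶜ by simp) ?_ hs
  have convergence_nhds : {t : ℂ | 1 < t.re} ∈ 𝓝 2 :=
    (isOpen_lt continuous_const continuous_re).mem_nhds (by simp)
  filter_upwards [convergence_nhds] with t ht
  rw [ZMod.LFunction_eq_LSeries Φ ht, ZMod.LFunction_eq_LSeries Ψ ht, funext h]

lemma sum_div_eq_sum_div_of_natCast_eq (h : ∀ n : ℕ, Φ n = Ψ n) :
    (∑ j, Φ j) / M = (∑ j, Ψ j) / N := by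
  -- Both averages are the residue at `1` of the common L-function.
  have residue_Φ := ZMod.LFunction_residue_one Φ
  have residue_Ψ := ZMod.LFunction_residue_one Ψ
  rw [← sum_div] at residue_Φ residue_Ψ
  refine tendsto_nhds_unique_of_eventuallyEq residue_Φ residue_Ψ ?_
  filter_upwards [self_mem_nhdsWithin] with s hs
  rw [LFunction_eq_of_natCast_eq_of_ne_one h hs]

lemma LFunction_eq_of_natCast_eq (h : ∀ n : ℕ, Φ n = Ψ n) {s : ℂ}
    (hs : s ≠ 1 ∨ ∑ j, Φ j = 0) : ZMod.LFunction Φ s = ZMod.LFunction Ψ s := by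
  rcases hs with hs | hΦ
  · exact LFunction_eq_of_natCast_eq_of_ne_one h hs
  · have hΨ : ∑ j, Ψ j = 0 := by
      simpa [hΦ, NeZero.ne] using (sum_div_eq_sum_div_of_natCast_eq h).symm
    exact congrFun ((ZMod.differentiable_LFunction_of_sum_zero hΦ).continuous.ext_on
      (dense_compl_singleton 1) (ZMod.differentiable_LFunction_of_sum_zero hΨ).continuous
      fun _ ht ↦ LFunction_eq_of_natCast_eq_of_ne_one h ht) s

lemma cpow_mul_LFunction_eq_sum_range (Φ : ZMod M → ℂ) (s : ℂ) :
    (M : ℂ) ^ s * ZMod.LFunction Φ s =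
      ∑ j ∈ range M, Φ j * hurwitzZeta ((j / M : ℝ) : UnitAddCircle) s := by
  have hM : (M : ℂ) ≠ 0 := NeZero.ne _
  rw [ZMod.LFunction, ← mul_assoc, ← cpow_add _ _ hM, add_neg_cancel, cpow_zero, one_mul]
  refine sum_bij' (fun a _ ↦ a.val) (fun j _ ↦ (j : ZMod M)) (fun a _ ↦ mem_range.mpr a.val_lt)
    (fun _ _ ↦ mem_univ _) (fun a _ ↦ a.natCast_zmod_val)
    (fun j hj ↦ ZMod.val_cast_of_lt (mem_range.mp hj)) fun a _ ↦ ?_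
  rw [a.natCast_zmod_val, ZMod.toAddCircle_apply]

end ZModLFunction

section Odd

open Finset HurwitzZeta

lemma sum_range_two_mul_add_one_eq_sum_add {A : Type*} [AddCommMonoid A] (f : ℕ → A) (m : ℕ) :
    ∑ j ∈ range (2 * m + 1), f j = ∑ j ∈ range m, (f j + f (2 * m - j)) + f m := by
  have upper_half : ∑ j ∈ range (m + 1), f (m + j) = ∑ j ∈ range (m + 1), f (2 * m - j) := by
    rw [← sum_range_reflect]
    refine sum_congr rfl fun j hj ↦ congrArg f ?_
    have := mem_range.mp hj
    omega
  rw [show 2 * m + 1 = m + (m + 1) by ring, sum_range_add, upper_half, sum_range_succ,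
    sum_add_distrib, add_assoc, show 2 * m - m = m by omega]

lemma odd_apply_natCast_eq_zero {A : Type*} [AddGroup A] [IsAddTorsionFree A] {m : ℕ}
    {Φ : ZMod (2 * m) → A} (hΦ : Φ.Odd) : Φ m = 0 := by
  have neg_eq : -(m : ZMod (2 * m)) = m := by
    rw [neg_eq_iff_add_eq_zero, ← two_mul]
    exact_mod_cast ZMod.natCast_self (2 * m)
  have := hΦ m
  rwa [neg_eq, self_eq_neg] at this

lemma sum_mul_hurwitzZeta_sub_eq_cpow_mul_LFunction {m : ℕ} [NeZero m] {Φ : ZMod (2 * m) → ℂ}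
    (hΦ : Φ.Odd) (s : ℂ) :
    ∑ j ∈ range m, Φ j * (hurwitzZeta ((j / (2 * m) : ℝ) : UnitAddCircle) s -
        hurwitzZeta ((1 - j / (2 * m) : ℝ) : UnitAddCircle) s) =
      (2 * m : ℂ) ^ s * ZMod.LFunction Φ s := by
  let f (j : ℕ) : ℂ := Φ j * hurwitzZeta ((j / (2 * m : ℕ) : ℝ) : UnitAddCircle) s
  have f_two_mul : f (2 * m) = 0 := by simp only [f, ZMod.natCast_self, hΦ.map_zero, zero_mul]
  have f_mid : f m = 0 := by simp only [f, odd_apply_natCast_eq_zero hΦ, zero_mul]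
  have f_sub {j : ℕ} (hj : j ≤ 2 * m) :
      f (2 * m - j) = -(Φ j * hurwitzZeta ((1 - j / (2 * m : ℕ) : ℝ) : UnitAddCircle) s) := by
    simp only [f]
    rw [Nat.cast_sub hj, Nat.cast_sub hj, ZMod.natCast_self, zero_sub, hΦ, sub_div,
      div_self (NeZero.ne _), neg_mul]
  calc
    _ = ∑ j ∈ range m, (f j + f (2 * m - j)) := by
      refine sum_congr rfl fun j hj ↦ ?_
      rw [f_sub (by have := mem_range.mp hj; omega), Nat.cast_mul, Nat.cast_two]
      simp only [f, Nat.cast_mul, Nat.cast_two]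
      ring
    _ = ∑ j ∈ range (2 * m), f j := by
      rw [← add_zero (∑ j ∈ range m, _), ← f_mid, ← sum_range_two_mul_add_one_eq_sum_add,
        sum_range_succ, f_two_mul, add_zero]
    _ = _ := by
      rw [← cpow_mul_LFunction_eq_sum_range, Nat.cast_mul, Nat.cast_two]

theorem sum_mul_hurwitzZeta_sub_eq_cpow_mul_LFunction_of_dvd {N m : ℕ} [NeZero N] [NeZero m]
    {Φ : ZMod N → ℂ} (hΦ : Φ.Odd) (hN : N ∣ 2 * m) (s : ℂ) :
    ∑ j ∈ range m, Φ j * (hurwitzZeta ((j / (2 * m) : ℝ) : UnitAddCircle) s -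
        hurwitzZeta ((1 - j / (2 * m) : ℝ) : UnitAddCircle) s) =
      (2 * m : ℂ) ^ s * ZMod.LFunction Φ s := by
  let Ψ : ZMod (2 * m) → ℂ := Φ ∘ ZMod.castHom hN (ZMod N)
  have Ψ_natCast (n : ℕ) : Ψ n = Φ n := by simp only [Ψ, Function.comp_apply, map_natCast]
  have Ψ_odd : Ψ.Odd := fun a ↦ by simp only [Ψ, Function.comp_apply, map_neg, hΦ _]
  rw [← LFunction_eq_of_natCast_eq Ψ_natCast (.inr Ψ_odd.sum_eq_zero),
    ← sum_mul_hurwitzZeta_sub_eq_cpow_mul_LFunction Ψ_odd]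
  simp only [Ψ_natCast]

end Odd

section Chi4

open Finset HurwitzZeta

lemma chi4_natCast_eq_ite (j : ℕ) : ZMod.χ₄ j = if Odd j then (-1) ^ (j / 2) else 0 := by
  split_ifs with hj
  · exact ZMod.χ₄_eq_neg_one_pow (Nat.odd_iff.mp hj)
  · rw [ZMod.χ₄_nat_eq_if_mod_four, if_pos (Nat.even_iff.mp (Nat.not_odd_iff_even.mp hj))]

lemma chi4_odd : Function.Odd ZMod.χ₄ := by
  unfold Function.Odd
  decide

theorem sum_hurwitzZeta_eq_LFunction_chi4_general (k : ℕ) [NeZero k] (s : ℂ) :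
    ∑ j ∈ range (2 * k) with Odd j, (-1 : ℂ) ^ (j / 2) *
        (hurwitzZeta ((j / (4 * k) : ℝ) : UnitAddCircle) s -
          hurwitzZeta ((1 - j / (4 * k) : ℝ) : UnitAddCircle) s) =
      (4 * k : ℂ) ^ s *
        DirichletCharacter.LFunction (ZMod.χ₄.ringHomComp (Int.castRingHom ℂ)) s := by
  set χ : DirichletCharacter ℂ 4 := ZMod.χ₄.ringHomComp (Int.castRingHom ℂ)
  have χ_apply (a : ZMod 4) : χ a = (ZMod.χ₄ a : ℂ) := rfl
  have χ_odd : Function.Odd χ := fun a ↦ by rw [χ_apply, chi4_odd, Int.cast_neg, χ_apply]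
  have four_dvd : 4 ∣ 2 * (2 * k) := ⟨k, by ring⟩
  have folded := sum_mul_hurwitzZeta_sub_eq_cpow_mul_LFunction_of_dvd χ_odd four_dvd s
  push_cast [χ_apply, chi4_natCast_eq_ite, ← mul_assoc, ite_mul, zero_mul] at folded
  norm_num only [← sum_filter] at folded
  exact folded

lemma four_mul_two_pow_cpow (n : ℕ) (s : ℂ) :
    (4 * (2 ^ n : ℕ) : ℂ) ^ s = 2 ^ (((n : ℂ) + 2) * s) := by
  rw [show (4 * (2 ^ n : ℕ) : ℂ) = 2 ^ (n + 2) by push_cast; ring]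
  exact_mod_cast (Complex.natCast_cpow_natCast_mul 2 (n + 2) s).symm

end Chi4

open Real in
/-- **Alternating combination of Hurwitz zeta functions equals a multiple of `L(s, χ₄)`.**
Let `ν ≥ 0` be an integer.  For every `s ∈ ℂ`,
`∑_{j ∈ I_{2^{ν+1}}^*} (−1)^⌊j/2⌋ (ζ(s, j/2^(ν+2)) − ζ(s, 1 − j/2^(ν+2)))
  = 2^((ν+2)s) · L(s, χ₄)`,
where the sum is over the odd integers `j` with `1 ≤ j ≤ 2^(ν+1) − 1`, `ζ(s,a)` is the
(analytically continued) Hurwitz zeta function, `χ₄` is the primitive Dirichlet character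
mod `4`, and `L(·, χ₄)` is its (entire) Dirichlet L-function. -/
theorem sum_hurwitzZeta_eq_LFunction_chi4 (ν : ℕ) (s : ℂ) :
    ∑ j ∈ (Finset.range (2 ^ (ν + 1))).filter (fun j => Odd j),
        (-1 : ℂ) ^ (j / 2) *
          (HurwitzZeta.hurwitzZeta (((j : ℝ) / 2 ^ (ν + 2) : ℝ) : UnitAddCircle) s -
            HurwitzZeta.hurwitzZeta (((1 - (j : ℝ) / 2 ^ (ν + 2) : ℝ)) : UnitAddCircle) s) =
      (2 : ℂ) ^ (((ν : ℂ) + 2) * s) *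
        DirichletCharacter.LFunction (ZMod.χ₄.ringHomComp (Int.castRingHom ℂ)) s := by
  have denom_eq : (4 : ℝ) * (2 ^ ν : ℕ) = 2 ^ (ν + 2) := by push_cast; ring
  rw [← four_mul_two_pow_cpow, ← sum_hurwitzZeta_eq_LFunction_chi4_general, denom_eq, pow_succ']
end

section
/- For every integer r ≥ 1, the matrix J_r satisfies: (i) J_r is orthogonal with determinant 1 (i.e. J_r ∈ SO(2^r, ℤ)); (ii) the characteristic polynomial of J_r is X^{2^r} + 1; (iii) J_r has order exactly 2^{r+1} in GL(2^r, ℤ); and (iv) J_r is conjugate to C_r in GL(2^r, ℚ). -/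
open Matrix

/-- `Cmat r` is the `2^r × 2^r` companion matrix of `X^(2^r) + 1`. -/
def Cmat (r : ℕ) : Matrix (Fin (2 ^ r)) (Fin (2 ^ r)) ℤ :=
  Matrix.of fun i j =>
    if (i : ℕ) = (j : ℕ) + 1 then 1
    else if (i : ℕ) = 0 ∧ (j : ℕ) = 2 ^ r - 1 then -1
    else 0

/-- The matrices `J_r`, defined recursively: `J_0 = (−1)` and
`J_{r+1} = [[0, J_r], [I, 0]]` as a `2^(r+1) × 2^(r+1)` block matrix. -/
def Jmat : (r : ℕ) → Matrix (Fin (2 ^ r)) (Fin (2 ^ r)) ℤ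
  | 0 => Matrix.of fun _ _ => -1
  | (r + 1) =>
      Matrix.reindex
        ((finSumFinEquiv (m := 2 ^ r) (n := 2 ^ r)).trans
          (finCongr (show 2 ^ r + 2 ^ r = 2 ^ (r + 1) by rw [pow_succ]; omega)))
        ((finSumFinEquiv (m := 2 ^ r) (n := 2 ^ r)).trans
          (finCongr (show 2 ^ r + 2 ^ r = 2 ^ (r + 1) by rw [pow_succ]; omega)))
        (Matrix.fromBlocks 0 (Jmat r) 1 0)

/-!
The characteristic polynomial of `[[0, A], [B, 0]]` is that of `A * B` evaluated at `X ^ 2`, so that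
of `J_r` is `X ^ 2 ^ r + 1` by induction.
Its constant coefficient gives the determinant, and Cayley–Hamilton gives `J_r ^ 2 ^ r = -1`, hence
the order. Over `ℚ` it is the `2 ^ (r + 1)`-th cyclotomic polynomial, which is irreducible, so every
nonzero `v` is cyclic; in the basis `v, J_r v, J_r² v, …` one reads off the companion matrix.
-/

open Polynomial

section Antidiagonal

variable {m n R : Type*} [Fintype m] [Fintype n]

theorem transpose_mul_self_fromBlocks_zero₁₁_zero₂₂ [NonUnitalNonAssocSemiring R]
    (A : Matrix m n R) (B : Matrix n m R) :
    (fromBlocks 0 A B 0)ᵀ * fromBlocks 0 A B 0 = fromBlocks (Bᵀ * B) 0 0 (Aᵀ * A) := by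
  simp [fromBlocks_transpose, fromBlocks_multiply]

variable [DecidableEq m] [DecidableEq n] [CommRing R]

theorem det_scalar_X_pow_sub_map_C (A : Matrix n n R) (k : ℕ) :
    (scalar n (X ^ k) - A.map C).det = expand R k A.charpoly := by
  rw [charpoly, AlgHom.map_det, charmatrix, map_sub]
  congr 2 <;> ext i j : 1
  · simp [diagonal_apply, apply_ite (expand R k)]
  · simp

-- Multiply `[[X, -A], [-B, X]]` on the right by `[[X, 0], [B, 1]]` to clear the lower left block.
theorem X_pow_mul_charpoly_fromBlocks_zero₁₁_zero₂₂ (A : Matrix m n R) (B : Matrix n m R) :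
    X ^ Fintype.card m * (fromBlocks 0 A B 0).charpoly =
      X ^ Fintype.card n * expand R 2 (A * B).charpoly := by
  have clear_block : (fromBlocks 0 A B 0).charmatrix * fromBlocks (scalar m X) 0 (B.map C) 1 =
      fromBlocks (scalar m (X ^ 2) - (A * B).map C) (-A.map C) 0 (scalar n X) := by
    rw [charmatrix_fromBlocks, fromBlocks_multiply]
    simp [charmatrix, sub_eq_add_neg, pow_two, scalar_comm, Commute.all, -scalar_apply]
  have det_eq := congrArg det clear_block
  rw [det_mul, det_fromBlocks_zero₁₂, det_fromBlocks_zero₂₁, det_scalar_X_pow_sub_map_C] at det_eq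
  simpa [charpoly, mul_comm] using det_eq

theorem charpoly_fromBlocks_zero₁₁_zero₂₂ (A B : Matrix n n R) :
    (fromBlocks 0 A B 0).charpoly = expand R 2 (A * B).charpoly :=
  (isRegular_X_pow _).left (X_pow_mul_charpoly_fromBlocks_zero₁₁_zero₂₂ A B)

end Antidiagonal

section Companion

variable {m R K : Type*} [Fintype m] [DecidableEq m] {n : ℕ}

/-- The companion matrix of a monic polynomial `p` of degree `n`, with the negated coefficients of
`p` in the last column. The size `n` is an argument so that it need not be `p.natDegree`. -/
def companionMatrix [Ring R] (n : ℕ) (p : R[X]) : Matrix (Fin n) (Fin n) R :=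
  of fun i j => if (i : ℕ) = j + 1 then 1 else if (j : ℕ) + 1 = n then -p.coeff i else 0

/-- The Krylov matrix of `M` and `v`, whose columns are `v, M v, …, M ^ (n - 1) v`; it is the change
of basis to companion form when these vectors form a basis. -/
def krylovMatrix [Semiring R] (n : ℕ) (M : Matrix m m R) (v : m → R) : Matrix m (Fin n) R :=
  of fun i k => (M ^ (k : ℕ) *ᵥ v) i

section CommRing

variable [CommRing R] {p q : R[X]} {M : Matrix m m R} {v : m → R}

theorem krylovMatrix_mulVec_coeff (M : Matrix m m R) (v : m → R) (hp : p.degree < n) :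
    krylovMatrix n M v *ᵥ (fun k => p.coeff k) = aeval M p *ᵥ v := by
  have aeval_eq : aeval M p = ∑ k : Fin n, p.coeff k • M ^ (k : ℕ) := by
    rw [aeval_def, eval₂_eq_sum, ← sum_fin _ (by simp) hp]
    simp only [Algebra.smul_def]
  ext i
  rw [aeval_eq, sum_mulVec, Finset.sum_apply]
  simp only [smul_mulVec, Pi.smul_apply, smul_eq_mul, mul_comm]
  rfl

theorem krylovMatrix_mul_companionMatrix (hp : p.Monic) (hn : p.natDegree = n)
    (hv : aeval M p *ᵥ v = 0) :
    krylovMatrix n M v * companionMatrix n p = M * krylovMatrix n M v := by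
  ext i j
  have shift : (M * krylovMatrix n M v) i j = (M ^ (j + 1 : ℕ) *ᵥ v) i := by
    rw [pow_succ', ← mulVec_mulVec]
    rfl
  rw [shift]
  obtain hj | hj : (j : ℕ) + 1 < n ∨ (j : ℕ) + 1 = n := by lia
  · rw [mul_apply, Finset.sum_eq_single ⟨j + 1, hj⟩] <;>
      simp +contextual [companionMatrix, krylovMatrix, Fin.ext_iff, hj.ne]
  · have last_col : (companionMatrix n p).col j = fun k : Fin n => (X ^ n - p).coeff k := by
      ext k
      simp [companionMatrix, coeff_X_pow, hj, k.isLt.ne]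
    have degree_lt : (X ^ n - p : R[X]).degree < n := by
      nontriviality R
      have degree_eq : (X ^ n : R[X]).degree = p.degree := by
        rw [degree_X_pow, degree_eq_natDegree hp.ne_zero, hn]
      simpa using degree_sub_lt_left degree_eq (monic_X_pow n).ne_zero (by simp [hp.leadingCoeff])
    calc (krylovMatrix n M v * companionMatrix n p) i j
        = (krylovMatrix n M v *ᵥ (companionMatrix n p).col j) i := rfl
      _ = (aeval M (X ^ n - p) *ᵥ v) i := by
        rw [last_col, krylovMatrix_mulVec_coeff M v degree_lt]
      _ = (M ^ (j + 1 : ℕ) *ᵥ v) i := by simp [sub_mulVec, hv, hj]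

theorem eq_zero_of_isCoprime_of_aeval_mulVec_eq_zero (hpq : IsCoprime p q)
    (hp : aeval M p *ᵥ v = 0) (hq : aeval M q *ᵥ v = 0) : v = 0 := by
  obtain ⟨a, b, hab⟩ := hpq
  calc v = aeval M (a * p + b * q) *ᵥ v := by simp [hab]
    _ = aeval M a *ᵥ aeval M p *ᵥ v + aeval M b *ᵥ aeval M q *ᵥ v := by
      simp [add_mulVec]
    _ = 0 := by simp [hp, hq]

end CommRing

variable [Field K] {M : Matrix (Fin n) (Fin n) K}

theorem isUnit_krylovMatrix (hM : Irreducible M.charpoly) {v : Fin n → K} (hv : v ≠ 0) :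
    IsUnit (krylovMatrix n M v) := by
  rw [← mulVec_injective_iff_isUnit, ← coe_mulVecLin, ← LinearMap.ker_eq_bot,
    LinearMap.ker_eq_bot']
  intro a ha
  let q := (degreeLTEquiv K n).symm a
  have coeff_q : (fun k : Fin n => (q : K[X]).coeff k) = a :=
    (degreeLTEquiv K n).apply_symm_apply a
  have degree_q : (q : K[X]).degree < n := mem_degreeLT.1 q.2
  have aeval_q : aeval M (q : K[X]) *ᵥ v = 0 := by
    rw [← krylovMatrix_mulVec_coeff M v degree_q, coeff_q]
    exact ha
  have dvd : M.charpoly ∣ q := by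
    by_contra not_dvd
    exact hv (eq_zero_of_isCoprime_of_aeval_mulVec_eq_zero
      (hM.coprime_iff_not_dvd.2 not_dvd) (by simp [aeval_self_charpoly]) aeval_q)
  have q_eq_zero : (q : K[X]) = 0 :=
    eq_zero_of_dvd_of_degree_lt dvd (by simpa [charpoly_degree_eq_dim] using degree_q)
  rw [← coeff_q, q_eq_zero]
  rfl

theorem exists_isUnit_mul_companionMatrix_eq_mul (hM : Irreducible M.charpoly) :
    ∃ P : Matrix (Fin n) (Fin n) K, IsUnit P.det ∧ P * companionMatrix n M.charpoly = M * P := by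
  have : NeZero n := ⟨by simpa using hM.natDegree_pos.ne'⟩
  obtain ⟨v, hv⟩ := exists_ne (0 : Fin n → K)
  exact ⟨krylovMatrix n M v, (isUnit_iff_isUnit_det _).1 (isUnit_krylovMatrix hM hv),
    krylovMatrix_mul_companionMatrix M.charpoly_monic (by simp)
      (by simp [aeval_self_charpoly])⟩

end Companion

theorem orderOf_eq_two_pow_succ_of_pow_eq_neg_one {G : Type*} [Monoid G] [HasDistribNeg G] {x : G}
    {r : ℕ} (hG : (-1 : G) ≠ 1) (hx : x ^ 2 ^ r = -1) : orderOf x = 2 ^ (r + 1) :=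
  orderOf_eq_prime_pow (by rwa [hx]) (by rw [pow_succ, pow_mul, hx, neg_one_sq])

theorem irreducible_X_pow_two_pow_add_one (r : ℕ) : Irreducible (X ^ 2 ^ r + 1 : ℚ[X]) := by
  have cyclotomic_eq : cyclotomic (2 ^ (r + 1)) ℚ = X ^ 2 ^ r + 1 := by
    simp [cyclotomic_prime_pow_eq_geom_sum Nat.prime_two, Finset.sum_range_succ, add_comm]
  exact cyclotomic_eq ▸ cyclotomic.irreducible_rat (by positivity)

theorem exists_Jmat_succ_eq_reindex (r : ℕ) :
    ∃ e : Fin (2 ^ r) ⊕ Fin (2 ^ r) ≃ Fin (2 ^ (r + 1)),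
      Jmat (r + 1) = reindex e e (fromBlocks 0 (Jmat r) 1 0) :=
  ⟨_, rfl⟩

theorem Jmat_transpose_mul_self (r : ℕ) : (Jmat r)ᵀ * Jmat r = 1 := by
  induction r with
  | zero => decide
  | succ r ih =>
    obtain ⟨e, he⟩ := exists_Jmat_succ_eq_reindex r
    rw [he, transpose_reindex, ← coe_reindexRingEquiv, ← map_mul,
      transpose_mul_self_fromBlocks_zero₁₁_zero₂₂, ih]
    simp

theorem Jmat_charpoly (r : ℕ) : (Jmat r).charpoly = X ^ 2 ^ r + 1 := by
  induction r with
  | zero => simp [charpoly, Jmat, charmatrix]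
  | succ r ih =>
    obtain ⟨e, he⟩ := exists_Jmat_succ_eq_reindex r
    rw [he, charpoly_reindex, charpoly_fromBlocks_zero₁₁_zero₂₂, mul_one, ih]
    simp [pow_succ', pow_mul]

theorem Jmat_det {r : ℕ} (hr : r ≠ 0) : (Jmat r).det = 1 := by
  have even_size : Even (2 ^ r) := even_two.pow_of_ne_zero hr
  simp [det_eq_sign_charpoly_coeff, Jmat_charpoly, coeff_X_pow, even_size.neg_one_pow,
    (Nat.two_pow_pos r).ne]

theorem Jmat_pow_two_pow (r : ℕ) : Jmat r ^ 2 ^ r = -1 := by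
  have cayley_hamilton := aeval_self_charpoly (Jmat r)
  rw [Jmat_charpoly] at cayley_hamilton
  exact eq_neg_of_add_eq_zero_left (by simpa using cayley_hamilton)

theorem orderOf_Jmat (r : ℕ) : orderOf (Jmat r) = 2 ^ (r + 1) :=
  orderOf_eq_two_pow_succ_of_pow_eq_neg_one
    (fun neg_one_eq_one => by simpa using congr_fun₂ neg_one_eq_one 0 0) (Jmat_pow_two_pow r)

section IntCast

variable (R : Type*)

theorem charpoly_map_Jmat [CommRing R] (r : ℕ) :
    ((Jmat r).map (Int.cast : ℤ → R)).charpoly = X ^ 2 ^ r + 1 := by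
  simpa [Jmat_charpoly] using charpoly_map (Jmat r) (Int.castRingHom R)

theorem Cmat_map_eq_companionMatrix [Ring R] (r : ℕ) :
    (Cmat r).map (Int.cast : ℤ → R) = companionMatrix (2 ^ r) (X ^ 2 ^ r + 1) := by
  ext i j
  have last_col : (j : ℕ) = 2 ^ r - 1 ↔ (j : ℕ) + 1 = 2 ^ r := by lia
  have coeff_eq : (X ^ 2 ^ r + 1 : R[X]).coeff i = if (i : ℕ) = 0 then 1 else 0 := by
    simp [coeff_X_pow, coeff_one, i.isLt.ne]
  simp only [Cmat, companionMatrix, map_apply, of_apply, coeff_eq, last_col]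
  split_ifs <;> simp_all

end IntCast

/-- **Properties of `J_r`.**  For every `r ≥ 1`: (i) `J_r` is orthogonal with determinant `1`
(i.e. `J_r ∈ SO(2^r, ℤ)`); (ii) its characteristic polynomial is `X^(2^r) + 1`;
(iii) `J_r` has order exactly `2^(r+1)`; (iv) `J_r` is conjugate to `C_r` in `GL(2^r, ℚ)`. -/
theorem Jmat_props (r : ℕ) (hr : 1 ≤ r) :
    (Jmat r)ᵀ * Jmat r = 1 ∧ (Jmat r).det = 1 ∧
    Matrix.charpoly (Jmat r) = Polynomial.X ^ (2 ^ r) + 1 ∧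
    orderOf (Jmat r) = 2 ^ (r + 1) ∧
    ∃ P : Matrix (Fin (2 ^ r)) (Fin (2 ^ r)) ℚ, IsUnit P.det ∧
      P * (Cmat r).map (Int.cast : ℤ → ℚ) = (Jmat r).map (Int.cast : ℤ → ℚ) * P := by
  obtain ⟨P, hP, hPC⟩ := exists_isUnit_mul_companionMatrix_eq_mul
    (charpoly_map_Jmat ℚ r ▸ irreducible_X_pow_two_pow_add_one r)
  rw [charpoly_map_Jmat ℚ, ← Cmat_map_eq_companionMatrix] at hPC
  exact ⟨Jmat_transpose_mul_self r, Jmat_det (by lia), Jmat_charpoly r, orderOf_Jmat r, P, hP, hPC⟩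
end

section
/- For every integer r ≥ 1, the cokernel of the group homomorphism ℤ^{2^r} → ℤ^{2^r} given by v ↦ (J_r − I)v is cyclic of order 2; that is, ℤ^{2^r} / (J_r − I)ℤ^{2^r} ≅ ℤ/2ℤ. In particular, 2v ∈ (J_r − I)ℤ^{2^r} for every v ∈ ℤ^{2^r}, and all standard basis vectors e_1, …, e_{2^r} are congruent to each other modulo (J_r − I)ℤ^{2^r}. -/
open Matrix

/-!
Eliminating `x` from `(A y - x, B x - y) = (a, b)` leaves `(B A - 1) y = B a + b`.  For `B = 1` and
`A = J_r` this says that `v = (a, b)` lies in the image of `J_{r+1} - 1` if and only if `a + b` lies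
in the image of `J_r - 1`.  Folding a vector in half preserves its coordinate sum, so, since
`J_0 - 1 = (-2)`, the image of `J_r - 1` consists of the vectors with even coordinate sum.
-/

section MulVecRange

variable {m n m' n' R : Type*} [Fintype n] [Fintype n']

theorem mem_range_mulVec_reindex [NonUnitalNonAssocSemiring R] (e : m ≃ m') (f : n ≃ n')
    (M : Matrix m n R) (v : m' → R) :
    v ∈ Set.range (reindex e f M).mulVec ↔ v ∘ e ∈ Set.range M.mulVec := by
  simp only [Set.mem_range, reindex_apply, submatrix_mulVec_equiv, Equiv.symm_symm,
    Equiv.comp_symm_eq]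
  constructor
  · rintro ⟨w, hw⟩
    exact ⟨w ∘ f, hw⟩
  · rintro ⟨w, hw⟩
    exact ⟨w ∘ f.symm, by rwa [Function.comp_assoc, f.symm_comp_self, Function.comp_id]⟩

theorem mem_range_mulVec_fromBlocks_sub_one [Ring R] [Fintype m] [DecidableEq m] [DecidableEq n]
    (A : Matrix m n R) (B : Matrix n m R) (v : m ⊕ n → R) :
    v ∈ Set.range (fromBlocks 0 A B 0 - 1).mulVec ↔
      B *ᵥ (v ∘ Sum.inl) + v ∘ Sum.inr ∈ Set.range (B * A - 1).mulVec := by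
  have mulVec_elim (x : m → R) (y : n → R) :
      (fromBlocks 0 A B 0 - 1) *ᵥ Sum.elim x y = Sum.elim (A *ᵥ y - x) (B *ᵥ x - y) := by
    rw [sub_mulVec, one_mulVec, fromBlocks_mulVec]
    ext (i | j) <;> simp
  constructor
  · rintro ⟨w, rfl⟩
    refine ⟨w ∘ Sum.inr, ?_⟩
    rw [← Sum.elim_comp_inl_inr w, mulVec_elim]
    simp only [Sum.elim_comp_inl, Sum.elim_comp_inr, sub_mulVec, one_mulVec, mulVec_sub,
      mulVec_mulVec]
    abel
  · rintro ⟨y, hy⟩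
    rw [sub_mulVec, one_mulVec, ← mulVec_mulVec] at hy
    refine ⟨Sum.elim (A *ᵥ y - v ∘ Sum.inl) y, ?_⟩
    have bottom : B *ᵥ (A *ᵥ y - v ∘ Sum.inl) - y = v ∘ Sum.inr := by
      rw [mulVec_sub, sub_right_comm, hy, add_sub_cancel_left]
    rw [mulVec_elim, sub_sub_cancel, bottom, Sum.elim_comp_inl_inr]

end MulVecRange

section CoordSumMod

variable {ι : Type*} [Fintype ι] {k : ℕ}

variable (ι k) in
/-- The coordinate sum modulo `k`, as a homomorphism `ℤ^ι → ℤ/kℤ`; for `k = 2` it identifies the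
cokernel of `J_r - 1` with `ℤ/2ℤ`. -/
def coordSumMod : (ι → ℤ) →ₗ[ℤ] ZMod k :=
  Fintype.linearCombination ℤ fun _ => 1

theorem coordSumMod_apply (v : ι → ℤ) : coordSumMod ι k v = ((∑ i, v i : ℤ) : ZMod k) := by
  simp [coordSumMod, Fintype.linearCombination_apply]

theorem mem_ker_coordSumMod {v : ι → ℤ} :
    v ∈ LinearMap.ker (coordSumMod ι k) ↔ (k : ℤ) ∣ ∑ i, v i := by
  rw [LinearMap.mem_ker, coordSumMod_apply, ZMod.intCast_zmod_eq_zero_iff_dvd]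

theorem coordSumMod_surjective [Nonempty ι] : Function.Surjective (coordSumMod ι k) := by
  classical
  intro z
  obtain ⟨a, rfl⟩ := ZMod.intCast_surjective z
  exact ⟨Pi.single (Classical.arbitrary ι) a, by simp [coordSumMod_apply]⟩

end CoordSumMod

theorem Jmat_zero_sub_one_mulVec (w : Fin (2 ^ 0) → ℤ) : (Jmat 0 - 1) *ᵥ w = (-2 : ℤ) • w := by
  have : Jmat 0 - 1 = (-2 : ℤ) • 1 := by decide
  rw [this, smul_mulVec, one_mulVec]

theorem exists_Jmat_succ_sub_one_eq_reindex (r : ℕ) :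
    ∃ e : Fin (2 ^ r) ⊕ Fin (2 ^ r) ≃ Fin (2 ^ (r + 1)),
      Jmat (r + 1) - 1 = reindex e e (fromBlocks 0 (Jmat r) 1 0 - 1) := by
  obtain ⟨e, he⟩ : ∃ e : Fin (2 ^ r) ⊕ Fin (2 ^ r) ≃ Fin (2 ^ (r + 1)),
      Jmat (r + 1) = reindex e e (fromBlocks 0 (Jmat r) 1 0) := ⟨_, rfl⟩
  exact ⟨e, by simp [he, submatrix_sub]⟩

theorem mem_range_mulVec_Jmat_sub_one (r : ℕ) (v : Fin (2 ^ r) → ℤ) :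
    v ∈ Set.range (Jmat r - 1).mulVec ↔ 2 ∣ ∑ i, v i := by
  induction r with
  | zero =>
    have sum_eq : ∑ i, v i = v 0 := Fin.sum_univ_one v
    rw [sum_eq]
    constructor
    · rintro ⟨w, rfl⟩
      exact ⟨-w 0, by rw [Jmat_zero_sub_one_mulVec]; simp⟩
    · rintro ⟨c, hc⟩
      refine ⟨fun _ => -c, funext fun i => ?_⟩
      obtain rfl : i = 0 := Subsingleton.elim (α := Fin 1) i 0
      rw [Jmat_zero_sub_one_mulVec, hc]
      simp
  | succ r ih =>
    obtain ⟨e, he⟩ := exists_Jmat_succ_sub_one_eq_reindex r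
    have sum_fold : ∑ i, ((v ∘ e) ∘ Sum.inl + (v ∘ e) ∘ Sum.inr) i = ∑ i, v i := by
      simp [← e.sum_comp v, Fintype.sum_sum_type, Finset.sum_add_distrib]
    rw [he, mem_range_mulVec_reindex, mem_range_mulVec_fromBlocks_sub_one, one_mulVec,
      Matrix.one_mul, ih, sum_fold]

theorem range_mulVecLin_Jmat_sub_one (r : ℕ) :
    LinearMap.range (mulVecLin (Jmat r - 1)) = LinearMap.ker (coordSumMod (Fin (2 ^ r)) 2) :=
  Submodule.ext fun v => (mem_range_mulVec_Jmat_sub_one r v).trans mem_ker_coordSumMod.symm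

/-- **The cokernel of `J_r − I` on `ℤ^(2^r)` is `ℤ/2ℤ`.**
For every `r ≥ 1`, `ℤ^(2^r) / (J_r − I)ℤ^(2^r) ≅ ℤ/2ℤ`.  In particular `2v` lies in
`(J_r − I)ℤ^(2^r)` for every `v`, and all standard basis vectors are congruent to each other
modulo `(J_r − I)ℤ^(2^r)`. -/
theorem cokernel_Jmat_sub_one (r : ℕ) (hr : 1 ≤ r) :
    Nonempty (((Fin (2 ^ r) → ℤ) ⧸
        LinearMap.range (Matrix.mulVecLin (Jmat r - 1))) ≃+ ZMod 2) ∧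
    (∀ v : Fin (2 ^ r) → ℤ, ∃ w, (Jmat r - 1).mulVec w = (2 : ℤ) • v) ∧
    (∀ i j : Fin (2 ^ r), ∃ w,
      (Jmat r - 1).mulVec w = Pi.single i (1 : ℤ) - Pi.single j (1 : ℤ)) := by
  refine ⟨⟨?_⟩, fun v => ?_, fun i j => ?_⟩
  · exact ((Submodule.quotEquivOfEq _ _ (range_mulVecLin_Jmat_sub_one r)).trans
      ((coordSumMod _ 2).quotKerEquivOfSurjective coordSumMod_surjective)).toAddEquiv
  · refine (mem_range_mulVec_Jmat_sub_one r _).2 ⟨∑ i, v i, ?_⟩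
    simp [Finset.mul_sum]
  · refine (mem_range_mulVec_Jmat_sub_one r _).2 ?_
    simp
end

section
/- Let n ≥ 1, let B ∈ GL(n, ℝ), let Λ be an additive subgroup of ℝ^n with BΛ = Λ, and let b ∈ ℝ^n. Let Γ be the subgroup of the group of affine bijections of ℝ^n generated by the map γ : x ↦ Bx + b together with all translations L_λ : x ↦ x + λ with λ ∈ Λ. Then the commutator subgroup of Γ is exactly the set of translations by vectors in (B − I)Λ: [Γ, Γ] = { L_v : v ∈ (B − I)Λ }, where (B − I)Λ = { Bλ − λ : λ ∈ Λ }. -/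
/-!
Write `Γ = ⟨γ⟩ ⊔ T`, where `T` is the group of translations by `Λ`. Both factors are commutative, so
modulo `⁅⟨γ⟩, T⁆`, which they normalize, all generators of `Γ` commute: `⁅Γ, Γ⁆ = ⁅⟨γ⟩, T⁆`.
Since `γ` normalizes the commutative group `T`, the map `t ↦ ⁅γ, t⁆` is a homomorphism on `T`, whose
range is again normalized by `γ` and is therefore all of `⁅⟨γ⟩, T⁆`. Finally, the commutator of `γ`
with the translation by `v` is the translation by `B v - v`, where `B` is the linear part of `γ`.
-/

open Subgroup
open scoped commutatorElement

section Group

variable {G : Type*} [Group G]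

theorem commutator_closure_le_of_subset_normalizer {S : Set G} {K N : Subgroup G}
    (hS : S ⊆ normalizer (N : Set G)) (hSK : ∀ s ∈ S, ∀ k ∈ K, ⁅s, k⁆ ∈ N) :
    ⁅closure S, K⁆ ≤ N := by
  have conj_mem := le_normalizer_iff.mp ((closure_le _).mpr hS)
  refine commutator_le.mpr fun x hx k hk => ?_
  induction hx using closure_induction with
  | mem s hs => exact hSK s hs k hk
  | one => simp
  | mul x y hx _ ihx ihy =>
    rw [commutatorElement_mul_left_eq_conj_mul]
    exact mul_mem (conj_mem x hx _ ihy) ihx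
  | inv x hx ih =>
    rw [commutatorElement_inv_left, ← commutatorElement_inv]
    simpa using conj_mem x⁻¹ (inv_mem hx) _ (inv_mem ih)

theorem commutator_sup_le_of_le_normalizer {H₁ H₂ K N : Subgroup G}
    (h₁ : H₁ ≤ normalizer (N : Set G)) (h₂ : H₂ ≤ normalizer (N : Set G))
    (h₁K : ⁅H₁, K⁆ ≤ N) (h₂K : ⁅H₂, K⁆ ≤ N) : ⁅H₁ ⊔ H₂, K⁆ ≤ N := by
  rw [sup_eq_closure]
  refine commutator_closure_le_of_subset_normalizer (Set.union_subset h₁ h₂) ?_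
  rintro s (hs | hs)
  · exact commutator_le.mp h₁K s hs
  · exact commutator_le.mp h₂K s hs

theorem commutator_sup_self_of_isMulCommutative (H K : Subgroup G) [IsMulCommutative H]
    [IsMulCommutative K] : ⁅H ⊔ K, H ⊔ K⁆ = ⁅H, K⁆ := by
  have commutator_sup_le {L : Subgroup G} (hHL : ⁅H, L⁆ ≤ ⁅H, K⁆) (hKL : ⁅K, L⁆ ≤ ⁅H, K⁆) :
      ⁅H ⊔ K, L⁆ ≤ ⁅H, K⁆ :=
    commutator_sup_le_of_le_normalizer (normalizer_commutator_ge_left H K)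
      (normalizer_commutator_ge_right H K) hHL hKL
  have hHH : ⁅H, H⁆ = ⊥ := commutator_self_eq_bot_iff.mpr inferInstance
  have hKK : ⁅K, K⁆ = ⊥ := commutator_self_eq_bot_iff.mpr inferInstance
  refine le_antisymm (commutator_sup_le ?_ ?_) (commutator_mono le_sup_left le_sup_right)
  · rw [commutator_comm]
    exact commutator_sup_le (hHH.trans_le bot_le) (commutator_comm_le K H)
  · rw [commutator_comm]
    exact commutator_sup_le le_rfl (hKK.trans_le bot_le)

section NormalizedCommutative

variable {A : Subgroup G} [IsMulCommutative A] {g : G}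

/-- The homomorphism `a ↦ ⁅g, a⁆` on a commutative subgroup `A` normalized by `g`. Its range is the
set of commutators of `g` with elements of `A`, as a subgroup of `G`. -/
def commutatorHom (hg : g ∈ normalizer (A : Set G)) : A →* G :=
  MonoidHom.mk' (fun a => ⁅g, (a : G)⁆) fun a b => by
    have hb : ⁅g, (b : G)⁆ ∈ A := mul_mem ((mem_normalizer_iff.mp hg _).mp b.2) (inv_mem b.2)
    have a_comm : (a : G) * ⁅g, (b : G)⁆ = ⁅g, (b : G)⁆ * a := setLike_mul_comm a.2 hb
    rw [coe_mul, commutatorElement_mul_right_eq_mul_conj, mul_assoc ⁅g, (a : G)⁆, a_comm,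
      ← mul_assoc, mul_inv_cancel_right]

theorem coe_range_commutatorHom (hg : g ∈ normalizer (A : Set G)) :
    ((commutatorHom hg).range : Set G) = (fun a => ⁅g, a⁆) '' (A : Set G) := by
  rw [MonoidHom.coe_range, Set.image_eq_range]
  rfl

theorem mem_normalizer_range_commutatorHom (hg : g ∈ normalizer (A : Set G)) :
    g ∈ normalizer ((commutatorHom hg).range : Set G) := by
  rw [mem_normalizer_iff_conj_image_eq, coe_range_commutatorHom, Set.image_image]
  conv_rhs => rw [← mem_normalizer_iff_conj_image_eq.mp hg, Set.image_image]
  simp only [MulAut.conj_apply, conjugate_commutatorElement, mul_inv_cancel_right]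

theorem commutator_zpowers_eq_range_commutatorHom (hg : g ∈ normalizer (A : Set G)) :
    ⁅zpowers g, A⁆ = (commutatorHom hg).range := by
  apply le_antisymm
  · rw [zpowers_eq_closure]
    refine commutator_closure_le_of_subset_normalizer
      (Set.singleton_subset_iff.mpr (mem_normalizer_range_commutatorHom hg)) ?_
    rintro _ rfl a ha
    exact ⟨⟨a, ha⟩, rfl⟩
  · rintro _ ⟨a, rfl⟩
    exact commutator_mem_commutator (mem_zpowers g) a.2

theorem coe_commutator_zpowers_sup_self (hg : g ∈ normalizer (A : Set G)) :
    ((⁅zpowers g ⊔ A, zpowers g ⊔ A⁆ : Subgroup G) : Set G) =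
      (fun a => ⁅g, a⁆) '' (A : Set G) := by
  rw [commutator_sup_self_of_isMulCommutative, commutator_zpowers_eq_range_commutatorHom hg,
    coe_range_commutatorHom]

end NormalizedCommutative

end Group

section Affine

variable {k V P : Type*} [Ring k] [AddCommGroup V] [Module k V] [AddTorsor V P]

theorem conj_constVAdd (γ : P ≃ᵃ[k] P) (v : V) :
    γ * AffineEquiv.constVAdd k P v * γ⁻¹ = AffineEquiv.constVAdd k P (γ.linear v) := by
  rw [mul_inv_eq_iff_eq_mul]
  ext p
  exact γ.map_vadd p v

theorem commutatorElement_constVAdd (γ : P ≃ᵃ[k] P) (v : V) :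
    ⁅γ, AffineEquiv.constVAdd k P v⁆ = AffineEquiv.constVAdd k P (γ.linear v - v) := by
  rw [commutatorElement_def, conj_constVAdd, sub_eq_add_neg, AffineEquiv.constVAdd_add,
    ← AffineEquiv.constVAdd_symm]
  rfl

variable (k P) in
/-- The group of translations of the affine space `P` by the vectors in `Λ`, inside the group of
affine automorphisms of `P`. -/
def translationSubgroup (Λ : AddSubgroup V) : Subgroup (P ≃ᵃ[k] P) :=
  Λ.toSubgroup.map (AffineEquiv.constVAddHom k P)

variable (k P) in
theorem coe_translationSubgroup (Λ : AddSubgroup V) :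
    (translationSubgroup k P Λ : Set (P ≃ᵃ[k] P)) =
      (fun v => AffineEquiv.constVAdd k P v) '' (Λ : Set V) :=
  rfl

instance translationSubgroup_isMulCommutative (Λ : AddSubgroup V) :
    IsMulCommutative (translationSubgroup k P Λ) :=
  inferInstanceAs (IsMulCommutative (Λ.toSubgroup.map (AffineEquiv.constVAddHom k P)))

theorem mem_normalizer_translationSubgroup {γ : P ≃ᵃ[k] P} {Λ : AddSubgroup V}
    (hΛ : ∀ v, γ.linear v ∈ Λ ↔ v ∈ Λ) :
    γ ∈ normalizer (translationSubgroup k P Λ : Set (P ≃ᵃ[k] P)) := by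
  have preimage_linear : γ.linear ⁻¹' (Λ : Set V) = Λ := Set.ext hΛ
  have image_linear : γ.linear '' (Λ : Set V) = Λ := by
    simpa only [preimage_linear] using Set.image_preimage_eq (Λ : Set V) γ.linear.surjective
  rw [mem_normalizer_iff_conj_image_eq, coe_translationSubgroup, Set.image_image]
  conv_rhs => rw [← image_linear, Set.image_image]
  simp only [MulAut.conj_apply, conj_constVAdd]

theorem commutator_subgroup_eq_translations_general (γ : P ≃ᵃ[k] P) (Λ : AddSubgroup V)
    (hΛ : ∀ v, γ.linear v ∈ Λ ↔ v ∈ Λ) :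
    let Γ : Subgroup (P ≃ᵃ[k] P) :=
      closure ({γ} ∪ (fun v => AffineEquiv.constVAdd k P v) '' (Λ : Set V))
    ((⁅Γ, Γ⁆ : Subgroup (P ≃ᵃ[k] P)) : Set (P ≃ᵃ[k] P)) =
      (fun v => AffineEquiv.constVAdd k P v) '' ((fun v => γ.linear v - v) '' (Λ : Set V)) := by
  intro Γ
  have hΓ : Γ = zpowers γ ⊔ translationSubgroup k P Λ := by
    rw [zpowers_eq_closure, ← closure_eq (translationSubgroup k P Λ), ← Subgroup.closure_union,
      coe_translationSubgroup]
  rw [hΓ, coe_commutator_zpowers_sup_self (mem_normalizer_translationSubgroup hΛ),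
    coe_translationSubgroup, Set.image_image, Set.image_image]
  simp only [commutatorElement_constVAdd]

end Affine

/-- **The commutator subgroup of a crystallographic-type group `Γ = ⟨γ, L_Λ⟩`.**
Let `n ≥ 1`, let `B ∈ GL(n, ℝ)` (as a linear automorphism of `ℝ^n`), let `Λ` be an additive
subgroup of `ℝ^n` with `BΛ = Λ`, and let `b ∈ ℝ^n`.  Let `Γ` be the subgroup of the group of
affine bijections of `ℝ^n` generated by `γ : x ↦ Bx + b` together with all translations
`L_λ : x ↦ x + λ`, `λ ∈ Λ`.  Then `[Γ, Γ] = { L_v : v ∈ (B − I)Λ }` where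
`(B − I)Λ = { Bλ − λ : λ ∈ Λ }`. -/
theorem commutator_subgroup_eq_translations
    (n : ℕ) (hn : 1 ≤ n)
    (B : (Fin n → ℝ) ≃ₗ[ℝ] (Fin n → ℝ))
    (Λ : AddSubgroup (Fin n → ℝ)) (hΛ : ∀ v : Fin n → ℝ, B v ∈ Λ ↔ v ∈ Λ)
    (b : Fin n → ℝ) :
    let γ : (Fin n → ℝ) ≃ᵃ[ℝ] (Fin n → ℝ) :=
      B.toAffineEquiv.trans (AffineEquiv.constVAdd ℝ (Fin n → ℝ) b)
    let Γ : Subgroup ((Fin n → ℝ) ≃ᵃ[ℝ] (Fin n → ℝ)) :=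
      Subgroup.closure ({γ} ∪
        (fun v => AffineEquiv.constVAdd ℝ (Fin n → ℝ) v) '' (Λ : Set (Fin n → ℝ)))
    ((⁅Γ, Γ⁆ : Subgroup ((Fin n → ℝ) ≃ᵃ[ℝ] (Fin n → ℝ))) :
        Set ((Fin n → ℝ) ≃ᵃ[ℝ] (Fin n → ℝ))) =
      (fun v => AffineEquiv.constVAdd ℝ (Fin n → ℝ) v) ''
        ((fun v => B v - v) '' (Λ : Set (Fin n → ℝ))) :=
  commutator_subgroup_eq_translations_general
    (B.toAffineEquiv.trans (AffineEquiv.constVAdd ℝ (Fin n → ℝ) b)) Λ hΛ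
end
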